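/- There is a positive constant κ_in, independent of n, such that for any a>0 and all integers n large enough, the internal DLA cluster on the comb satisfies P( 𝒟(n − a·√(log n)) ⊄ A(n) ) ≤ d(n)·exp( −κ_in·a²·log n ). -/

import Mathlib

open MeasureTheory ENNReal
open scoped Pointwise

/-- Adjacency in the comb lattice `𝒞`. -/
def combAdj (z w : ℤ × ℤ) : Prop :=
  (z.1 = w.1 ∧ |z.2 - w.2| = 1) ∨ (z.2 = 0 ∧ w.2 = 0 ∧ |z.1 - w.1| = 1)

/-- Degree of a vertex in the comb. -/
def combDeg (z : ℤ × ℤ) : ℕ := if z.2 = 0 then 4 else 2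

open Classical in
/-- One-step transition probability of the simple random walk on the comb. -/
noncomputable def stepProb (z w : ℤ × ℤ) : ℝ≥0∞ :=
  if combAdj z w then ((combDeg z : ℝ≥0∞))⁻¹ else 0

/-- Probability that the walk started at `v` follows the given finite path. -/
noncomputable def pathProb (v : ℤ × ℤ) {n : ℕ} (path : Fin (n + 1) → ℤ × ℤ) : ℝ≥0∞ :=
  (if path 0 = v then 1 else 0) * ∏ i : Fin n, stepProb (path i.castSucc) (path i.succ)

/-- `S` is a simple random walk on the comb started at `v`, under the probability
measure `P` (characterized by its finite-dimensional distributions). -/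
def IsCombWalk {Ω : Type*} [MeasurableSpace Ω] (P : Measure Ω)
    (S : ℕ → Ω → ℤ × ℤ) (v : ℤ × ℤ) : Prop :=
  IsProbabilityMeasure P ∧ (∀ t, Measurable (S t)) ∧
    ∀ (n : ℕ) (path : Fin (n + 1) → ℤ × ℤ),
      P {ω | ∀ i : Fin (n + 1), S i ω = path i} = pathProb v path

/-- `W i`, `i : ℕ`, are i.i.d. simple random walks on the comb started at the origin. -/
def IsIIDCombWalks {Ω : Type*} [MeasurableSpace Ω] (P : Measure Ω)
    (W : ℕ → ℕ → Ω → ℤ × ℤ) : Prop :=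
  IsProbabilityMeasure P ∧ (∀ i t, Measurable (W i t)) ∧
    ∀ (k n : ℕ) (path : Fin k → Fin (n + 1) → ℤ × ℤ),
      P {ω | ∀ i : Fin k, ∀ t : Fin (n + 1), W i t ω = path i t} =
        ∏ i : Fin k, pathProb (0, 0) (path i)

/-- The domain `𝒟(ρ) = D(ρ) ∩ ℤ²`. -/
def combD (ρ : ℝ) : Set (ℤ × ℤ) :=
  {z | |(z.1 : ℝ)| < ρ ∧ |(z.2 : ℝ)| < (ρ - |(z.1 : ℝ)|) ^ 2 / 3}

/-- The boundary `∂𝒟(ρ)`: sites outside `𝒟(ρ)` at graph distance 1 from `𝒟(ρ)`. -/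
def combBoundary (ρ : ℝ) : Set (ℤ × ℤ) :=
  {z | z ∉ combD ρ ∧ ∃ w ∈ combD ρ, combAdj w z}

/-- Hitting time of a set by a trajectory (`⊤` if the set is never hit). -/
noncomputable def hitTime (Λ : Set (ℤ × ℤ)) (traj : ℕ → ℤ × ℤ) : ℕ∞ :=
  ⨅ (m : ℕ) (_ : traj m ∈ Λ), (m : ℕ∞)

/-- The trajectory exits `D` for the first time at the site `z`. -/
def exitsAt (D : Set (ℤ × ℤ)) (z : ℤ × ℤ) (traj : ℕ → ℤ × ℤ) : Prop :=
  ∃ n : ℕ, (∀ m < n, traj m ∈ D) ∧ traj n ∉ D ∧ traj n = z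

/-- Green's function of the walk `S` killed upon exiting `Λ`:
expected number of visits to `y` strictly before the exit time. -/
noncomputable def greenFn {Ω : Type*} [MeasurableSpace Ω] (P : Measure Ω)
    (S : ℕ → Ω → ℤ × ℤ) (Λ : Set (ℤ × ℤ)) (y : ℤ × ℤ) : ℝ≥0∞ :=
  ∑' n : ℕ, P {ω | (∀ m ≤ n, S m ω ∈ Λ) ∧ S n ω = y}

/-- The parent `𝒜(z)` of a vertex of the comb: its unique neighbor closer to the origin. -/
def parent (z : ℤ × ℤ) : ℤ × ℤ :=
  if z.2 = 0 then (z.1 - Int.sign z.1, 0) else (z.1, z.2 - Int.sign z.2)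

/-- First site outside `A` visited by the trajectory: the settlement site of an explorer. -/
noncomputable def settlePoint (A : Set (ℤ × ℤ)) (traj : ℕ → ℤ × ℤ) : ℤ × ℤ :=
  traj (sInf {n | traj n ∉ A})

/-- The internal DLA cluster after `k` explorers with trajectories `W 0, …, W (k-1)`. -/
noncomputable def dlaCluster (W : ℕ → ℕ → ℤ × ℤ) : ℕ → Set (ℤ × ℤ)
  | 0 => ∅
  | k + 1 => dlaCluster W k ∪ {settlePoint (dlaCluster W k) (W k)}

open Classical in
/-- Toppling at `x` for the divisible sandpile: the mass exceeding 1 at `x`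
is distributed equally among the neighbors of `x` in the comb. -/
noncomputable def topple (x : ℤ × ℤ) (μ : ℤ × ℤ → ℝ) : ℤ × ℤ → ℝ := fun z =>
  if μ x ≤ 1 then μ z
  else if z = x then 1
  else if combAdj x z then μ z + (μ x - 1) / (combDeg x : ℝ)
  else μ z

/-- Mass distribution of the divisible sandpile started with mass `mass` at the
origin, after `k` topplings along the sequence `seq`. -/
noncomputable def sandMass (seq : ℕ → ℤ × ℤ) (mass : ℝ) : ℕ → ℤ × ℤ → ℝ
  | 0 => fun z => if z = (0, 0) then mass else 0
  | k + 1 => topple (seq k) (sandMass seq mass k)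

/-- The odometer of the divisible sandpile: total mass emitted from `z`. -/
noncomputable def odometer (seq : ℕ → ℤ × ℤ) (mass : ℝ) (z : ℤ × ℤ) : ℝ :=
  ∑' k : ℕ, if seq k = z then max (sandMass seq mass k z - 1) 0 else 0

/-- The divisible sandpile cluster: sites which emitted positive mass. -/
def sandCluster (seq : ℕ → ℤ × ℤ) (mass : ℝ) : Set (ℤ × ℤ) :=
  {z | 0 < odometer seq mass z}

/-- Euclidean ball `𝔹(R)` of radius `R` in `ℤ²`. -/
def ballZ (R : ℝ) : Set (ℤ × ℤ) :=
  {z | Real.sqrt ((z.1 : ℝ) ^ 2 + (z.2 : ℝ) ^ 2) < R}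

/-- Smallest integer `≥ (ρ - x)²/3`. -/
noncomputable def Lrho (ρ : ℝ) (x : ℤ) : ℕ := ⌈(ρ - (x : ℝ)) ^ 2 / 3⌉₊

/-- Smallest integer `≥ (ρ - |x|)²/3`. -/
noncomputable def LrhoAbs (ρ : ℝ) (x : ℤ) : ℕ := ⌈(ρ - |(x : ℝ)|) ^ 2 / 3⌉₊

/-!
Let `h ≥ 0` be finitely supported, at most `1 / 2`, and subharmonic away from a site `z`. As long as
`z` has not been reached, the walk sees `1 - h` as superharmonic, so by optional stopping
`∏ y ∈ A_k, (1 - h y) / (1 - h 0) ^ k` is a supermartingale on the event `z ∉ A_k`. Hence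
`P (z ∉ A_d) ≤ exp (-(d * h 0 - ∑ h - ∑ h ^ 2))`.

For `z ∈ 𝒟(n - T)` take `h = s * H`, where `H` is an explicit Green-type function with pole `z`
vanishing outside `𝒟(n - 1)`. Its energy `∑ H ^ 2` is bounded by an absolute constant. Summing `H`
by parts against the approximate odometer `V (x, y) ≈ ((n - |x|) ^ 2 / 3 - |y|) ^ 2 / 2` of the
divisible sandpile, whose Laplacian is at least `1` off the origin and about `1 - d(n)` at it, gives
`d(n) * H 0 - ∑ H ≥ -V z * ΔH z`, which is at least of order `T`. Optimizing over `s` yields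
`exp (-κ * T ^ 2)`, and a union bound over `z` with `T = a √(log n)` concludes.
-/

/-! ### Random walks on the comb -/

section Transition

/-- The transition operator of the simple random walk on the comb, acting on `ℝ≥0∞`-valued
functions: `combAvg f v` is the mean of `f` over the neighbors of `v`. -/
noncomputable def combAvg (f : ℤ × ℤ → ℝ≥0∞) (v : ℤ × ℤ) : ℝ≥0∞ :=
  ∑' w, stepProb v w * f w

lemma combAdj_spine_iff (x : ℤ) (w : ℤ × ℤ) :
    combAdj (x, 0) w ↔ w ∈ ({(x + 1, 0), (x - 1, 0), (x, 1), (x, -1)} : Finset (ℤ × ℤ)) := by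
  obtain ⟨a, b⟩ := w
  simp only [combAdj, abs_eq (zero_le_one (α := ℤ)), Finset.mem_insert, Finset.mem_singleton,
    Prod.mk.injEq, true_and]
  omega

lemma combAdj_tooth_iff {x y : ℤ} (hy : y ≠ 0) (w : ℤ × ℤ) :
    combAdj (x, y) w ↔ w ∈ ({(x, y + 1), (x, y - 1)} : Finset (ℤ × ℤ)) := by
  obtain ⟨a, b⟩ := w
  simp only [combAdj, abs_eq (zero_le_one (α := ℤ)), Finset.mem_insert, Finset.mem_singleton,
    Prod.mk.injEq]
  omega

lemma combAvg_eq_sum {v : ℤ × ℤ} {s : Finset (ℤ × ℤ)} (hs : ∀ w, combAdj v w ↔ w ∈ s)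
    (f : ℤ × ℤ → ℝ≥0∞) : combAvg f v = (∑ w ∈ s, f w) / combDeg v := by
  rw [combAvg, tsum_eq_sum (s := s) fun w hw => by rw [stepProb, if_neg (by rwa [hs]), zero_mul],
    div_eq_mul_inv, mul_comm, Finset.mul_sum]
  exact Finset.sum_congr rfl fun w hw => by rw [stepProb, if_pos ((hs w).2 hw)]

lemma combAvg_spine (f : ℤ × ℤ → ℝ≥0∞) (x : ℤ) :
    combAvg f (x, 0) = (f (x + 1, 0) + f (x - 1, 0) + f (x, 1) + f (x, -1)) / 4 := by
  rw [combAvg_eq_sum (combAdj_spine_iff x), Finset.sum_insert (by simp; omega),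
    Finset.sum_insert (by simp), Finset.sum_insert (by simp), Finset.sum_singleton, combDeg,
    if_pos rfl]
  simp only [add_assoc, Nat.cast_ofNat]

lemma combAvg_tooth (f : ℤ × ℤ → ℝ≥0∞) (x : ℤ) {y : ℤ} (hy : y ≠ 0) :
    combAvg f (x, y) = (f (x, y + 1) + f (x, y - 1)) / 2 := by
  rw [combAvg_eq_sum (combAdj_tooth_iff hy), Finset.sum_insert (by simp; omega),
    Finset.sum_singleton, combDeg, if_neg hy, Nat.cast_ofNat]

end Transition

section Markov

variable {Ω : Type*} [MeasurableSpace Ω] {P : Measure Ω} {S : ℕ → Ω → ℤ × ℤ} {v : ℤ × ℤ}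

/-- The first `t + 1` positions of the walk `S`, as a random variable. -/
def pathUpTo {Ω : Type*} (S : ℕ → Ω → ℤ × ℤ) (t : ℕ) (ω : Ω) : Fin (t + 1) → ℤ × ℤ :=
  fun i => S i ω

lemma pathProb_snoc {t : ℕ} (q : Fin (t + 1) → ℤ × ℤ) (w : ℤ × ℤ) :
    pathProb v (Fin.snoc q w : Fin (t + 2) → ℤ × ℤ) =
      pathProb v q * stepProb (q (Fin.last t)) w := by
  have h_zero : (Fin.snoc q w : Fin (t + 2) → ℤ × ℤ) 0 = q 0 :=
    Fin.snoc_castSucc (α := fun _ => ℤ × ℤ) w q 0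
  simp only [pathProb, h_zero, Fin.prod_univ_castSucc, Fin.succ_castSucc, Fin.snoc_castSucc,
    Fin.succ_last, Fin.snoc_last, mul_assoc]

namespace IsCombWalk

lemma measurable_pathUpTo (hS : IsCombWalk P S v) (t : ℕ) : Measurable (pathUpTo S t) :=
  measurable_pi_lambda _ fun i => hS.2.1 i

lemma measure_pathUpTo_eq (hS : IsCombWalk P S v) {t : ℕ} (q : Fin (t + 1) → ℤ × ℤ) :
    P (pathUpTo S t ⁻¹' {q}) = pathProb v q := by
  rw [← hS.2.2 t q]
  congr 1
  ext ω
  exact funext_iff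

lemma lintegral_pathUpTo (hS : IsCombWalk P S v) {t : ℕ} (F : (Fin (t + 1) → ℤ × ℤ) → ℝ≥0∞) :
    ∫⁻ ω, F (pathUpTo S t ω) ∂P = ∑' q, F q * pathProb v q := by
  rw [← lintegral_map (measurable_of_countable F) (hS.measurable_pathUpTo t), lintegral_countable']
  refine tsum_congr fun q => ?_
  rw [Measure.map_apply (hS.measurable_pathUpTo t) (measurableSet_singleton q),
    hS.measure_pathUpTo_eq]

theorem lintegral_mul_succ (hS : IsCombWalk P S v) (t : ℕ) (φ : (Fin (t + 1) → ℤ × ℤ) → ℝ≥0∞)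
    (f : ℤ × ℤ → ℝ≥0∞) :
    ∫⁻ ω, φ (pathUpTo S t ω) * f (S (t + 1) ω) ∂P =
      ∫⁻ ω, φ (pathUpTo S t ω) * combAvg f (S t ω) ∂P := by
  calc ∫⁻ ω, φ (pathUpTo S t ω) * f (S (t + 1) ω) ∂P
      = ∑' p : Fin (t + 2) → ℤ × ℤ, φ (Fin.init p) * f (p (Fin.last (t + 1))) * pathProb v p :=
        hS.lintegral_pathUpTo fun p : Fin (t + 2) → ℤ × ℤ =>
          φ (Fin.init p) * f (p (Fin.last (t + 1)))
    _ = ∑' q : Fin (t + 1) → ℤ × ℤ, ∑' w, φ q * f w * (pathProb v q *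
          stepProb (q (Fin.last t)) w) := by
        rw [← (Fin.snocEquiv fun _ : Fin (t + 2) => ℤ × ℤ).tsum_eq, ENNReal.tsum_prod',
          ENNReal.tsum_comm]
        refine tsum_congr fun q => tsum_congr fun w => ?_
        rw [← pathProb_snoc, show (Fin.snocEquiv fun _ => ℤ × ℤ) (w, q) = Fin.snoc q w from rfl,
          Fin.init_snoc, Fin.snoc_last]
    _ = ∑' q : Fin (t + 1) → ℤ × ℤ, φ q * combAvg f (q (Fin.last t)) * pathProb v q := by
        refine tsum_congr fun q => ?_
        rw [combAvg, mul_right_comm, ← ENNReal.tsum_mul_left]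
        exact tsum_congr fun w => by ring
    _ = ∫⁻ ω, φ (pathUpTo S t ω) * combAvg f (S t ω) ∂P :=
        (hS.lintegral_pathUpTo fun q => φ q * combAvg f (q (Fin.last t))).symm

lemma setLIntegral_succ (hS : IsCombWalk P S v) {t : ℕ} (Q : Set (Fin (t + 1) → ℤ × ℤ))
    (f : ℤ × ℤ → ℝ≥0∞) :
    ∫⁻ ω in pathUpTo S t ⁻¹' Q, f (S (t + 1) ω) ∂P =
      ∫⁻ ω in pathUpTo S t ⁻¹' Q, combAvg f (S t ω) ∂P := by
  have h_meas : MeasurableSet (pathUpTo S t ⁻¹' Q) :=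
    hS.measurable_pathUpTo t Q.to_countable.measurableSet
  have h_indicator (g : Ω → ℝ≥0∞) : ∫⁻ ω in pathUpTo S t ⁻¹' Q, g ω ∂P =
      ∫⁻ ω, Q.indicator 1 (pathUpTo S t ω) * g ω ∂P := by
    rw [← lintegral_indicator h_meas]
    refine lintegral_congr fun ω => ?_
    by_cases hω : pathUpTo S t ω ∈ Q <;> simp [Set.indicator, hω]
  rw [h_indicator, h_indicator, hS.lintegral_mul_succ]

lemma ae_zero_eq (hS : IsCombWalk P S v) : ∀ᵐ ω ∂P, S 0 ω = v := by
  have := hS.1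
  refine (mem_ae_iff_prob_eq_one₀ (hS.2.1 0 (measurableSet_singleton v)).nullMeasurableSet).2 ?_
  have h_path := hS.measure_pathUpTo_eq (t := 0) fun _ => v
  rw [pathProb, if_pos rfl, Fin.prod_univ_zero, one_mul] at h_path
  rw [← h_path]
  congr 1
  ext ω
  simp [pathUpTo, funext_iff]

end IsCombWalk

end Markov

section Laplacian

/-- The discrete Laplacian on `ℤ`. -/
def secondDiff (f : ℤ → ℝ) (x : ℤ) : ℝ := f (x + 1) + f (x - 1) - 2 * f x

/-- The unnormalized graph Laplacian of the comb, `∑ (h w - h v)` over the neighbors `w` of `v`. -/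
def combLaplacian (h : ℤ × ℤ → ℝ) (v : ℤ × ℤ) : ℝ :=
  secondDiff (fun y => h (v.1, y)) v.2 +
    if v.2 = 0 then secondDiff (fun x => h (x, 0)) v.1 else 0

lemma combLaplacian_spine (h : ℤ × ℤ → ℝ) (x : ℤ) :
    combLaplacian h (x, 0) = secondDiff (fun y => h (x, y)) 0 + secondDiff (fun x => h (x, 0)) x :=
  by simp [combLaplacian]

lemma combLaplacian_tooth (h : ℤ × ℤ → ℝ) (x : ℤ) {y : ℤ} (hy : y ≠ 0) :
    combLaplacian h (x, y) = secondDiff (fun y => h (x, y)) y := by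
  simp [combLaplacian, hy]

lemma combAvg_ofReal {u : ℤ × ℤ → ℝ} {v : ℤ × ℤ} (hu : ∀ w, combAdj v w → 0 ≤ u w) :
    combAvg (fun w => ENNReal.ofReal (u w)) v =
      ENNReal.ofReal (u v + combLaplacian u v / combDeg v) := by
  obtain ⟨x, y⟩ := v
  rcases eq_or_ne y 0 with rfl | hy
  · simp only [combAdj_spine_iff, Finset.forall_mem_insert, Finset.mem_singleton,
      forall_eq] at hu
    obtain ⟨h_right, h_left, h_up, h_down⟩ := hu
    rw [combAvg_spine, ← ENNReal.ofReal_add h_right h_left, ← ENNReal.ofReal_add (by positivity)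
      h_up, ← ENNReal.ofReal_add (by positivity) h_down, ← ENNReal.ofReal_ofNat 4,
      ← ENNReal.ofReal_div_of_pos four_pos, combLaplacian_spine]
    congr 1
    simp only [secondDiff, combDeg, if_true, zero_add, zero_sub, Nat.cast_ofNat]
    ring
  · simp only [combAdj_tooth_iff hy, Finset.forall_mem_insert, Finset.mem_singleton,
      forall_eq] at hu
    obtain ⟨h_up, h_down⟩ := hu
    rw [combAvg_tooth _ _ hy, ← ENNReal.ofReal_add h_up h_down, ← ENNReal.ofReal_ofNat 2,
      ← ENNReal.ofReal_div_of_pos two_pos, combLaplacian_tooth _ _ hy]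
    congr 1
    simp only [secondDiff, combDeg, if_neg hy, Nat.cast_ofNat]
    ring

lemma combAvg_one_sub_le {h : ℤ × ℤ → ℝ} (h_le : ∀ w, h w ≤ 1) {v : ℤ × ℤ}
    (h_sub : 0 ≤ combLaplacian h v) :
    combAvg (fun w => ENNReal.ofReal (1 - h w)) v ≤ ENNReal.ofReal (1 - h v) := by
  have h_neg : combLaplacian (fun w => 1 - h w) v = -combLaplacian h v := by
    simp only [combLaplacian, secondDiff]
    split_ifs <;> ring
  rw [combAvg_ofReal fun w _ => sub_nonneg.2 (h_le w), h_neg, neg_div]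
  exact ENNReal.ofReal_le_ofReal (add_le_of_nonpos_right (neg_nonpos.2 (by positivity)))

lemma exists_lyapunov (B : Finset (ℤ × ℤ)) : ∃ f : ℤ × ℤ → ℝ≥0∞, (∀ v, f v ≠ ⊤) ∧
    ∀ v ∈ B, combAvg f v + ENNReal.ofReal (1 / 2) ≤ f v := by
  let K : ℝ := ∑ v ∈ B, (|(v.2 : ℝ)| + 1) ^ 2
  let u : ℤ × ℤ → ℝ := fun w => K - (w.2 : ℝ) ^ 2
  have h_drift (v : ℤ × ℤ) : -1 ≤ combLaplacian u v / combDeg v ∧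
      combLaplacian u v / combDeg v ≤ -(1 / 2) := by
    simp only [u, combLaplacian, secondDiff, combDeg]
    split_ifs with hy <;> push_cast <;> ring_nf <;> norm_num
  refine ⟨fun w => ENNReal.ofReal (u w), fun v => ENNReal.ofReal_ne_top, fun v hv => ?_⟩
  have h_K : (|(v.2 : ℝ)| + 1) ^ 2 ≤ K :=
    Finset.single_le_sum (f := fun v : ℤ × ℤ => (|(v.2 : ℝ)| + 1) ^ 2)
      (fun _ _ => by positivity) hv
  have h_nbr (w : ℤ × ℤ) (hw : combAdj v w) : 0 ≤ u w := by
    have h_dist : |w.2| ≤ |v.2| + 1 := by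
      rcases hw with ⟨-, h⟩ | ⟨-, h, -⟩
      · have := abs_sub_abs_le_abs_sub w.2 v.2
        rw [abs_sub_comm, h] at this
        linarith
      · rw [h, abs_zero]; positivity
    have h_sq : (w.2 : ℝ) ^ 2 ≤ (|(v.2 : ℝ)| + 1) ^ 2 := by
      rw [← sq_abs (w.2 : ℝ)]
      exact pow_le_pow_left₀ (abs_nonneg _) (mod_cast h_dist) 2
    exact sub_nonneg.2 (h_sq.trans h_K)
  have h_next : 0 ≤ u v + combLaplacian u v / combDeg v := by
    have h_one : 1 ≤ u v := by
      have := sq_abs (v.2 : ℝ)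
      have := abs_nonneg (v.2 : ℝ)
      simp only [u]
      nlinarith
    linarith [(h_drift v).1]
  rw [combAvg_ofReal h_nbr, ← ENNReal.ofReal_add h_next (by norm_num)]
  exact ENNReal.ofReal_le_ofReal (by linarith [(h_drift v).2])

end Laplacian

section OptionalStopping

variable {Ω : Type*} {S : ℕ → Ω → ℤ × ℤ}

open Classical in
/-- The trajectory `traj` frozen at the first site that it visits outside `B`. The recursion,
unlike `settlePoint`, also gives the right value on trajectories that never leave `B`. -/
noncomputable def stoppedTraj (B : Set (ℤ × ℤ)) (traj : ℕ → ℤ × ℤ) : ℕ → ℤ × ℤ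
  | 0 => traj 0
  | t + 1 => if ∀ s ≤ t, traj s ∈ B then traj (t + 1) else stoppedTraj B traj t

lemma stoppedTraj_eq_self {B : Set (ℤ × ℤ)} {traj : ℕ → ℤ × ℤ} {t : ℕ}
    (h : ∀ s ≤ t, traj s ∈ B) : stoppedTraj B traj t = traj t := by
  cases t with
  | zero => rfl
  | succ t => rw [stoppedTraj, if_pos fun s hs => h s (Nat.le_succ_of_le hs)]

lemma stoppedTraj_eq_settlePoint {B : Set (ℤ × ℤ)} {traj : ℕ → ℤ × ℤ} (hex : ∃ n, traj n ∉ B)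
    {t : ℕ} (ht : sInf {n | traj n ∉ B} ≤ t) :
    stoppedTraj B traj t = settlePoint B traj := by
  have h_exit : traj (sInf {n | traj n ∉ B}) ∉ B := Nat.sInf_mem (s := {n | traj n ∉ B}) hex
  have h_before : ∀ m < sInf {n | traj n ∉ B}, traj m ∈ B := fun m hm =>
    not_not.1 (Nat.notMem_of_lt_sInf hm)
  unfold settlePoint
  generalize sInf {n | traj n ∉ B} = τ at *
  induction t, ht using Nat.le_induction with
  | base =>
    cases τ with
    | zero => rfl
    | succ τ => rw [stoppedTraj, if_pos fun s hs => h_before s (Nat.lt_succ_of_le hs)]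
  | succ t ht ih => rw [stoppedTraj, if_neg fun h => h_exit (h τ ht), ih]

/-- The event that the walk `S` stays in `B` up to time `t`. -/
def survivalEvent {Ω : Type*} (S : ℕ → Ω → ℤ × ℤ) (B : Set (ℤ × ℤ)) (t : ℕ) : Set Ω :=
  pathUpTo S t ⁻¹' {q | ∀ i, q i ∈ B}

lemma mem_survivalEvent {B : Set (ℤ × ℤ)} {t : ℕ} {ω : Ω} :
    ω ∈ survivalEvent S B t ↔ ∀ s ≤ t, S s ω ∈ B :=
  ⟨fun h s hs => h ⟨s, Nat.lt_succ_of_le hs⟩, fun h i => h i (Nat.le_of_lt_succ i.2)⟩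

lemma measurable_settlePoint {m : MeasurableSpace Ω} (hS : ∀ t, Measurable[m] (S t))
    (B : Set (ℤ × ℤ)) : Measurable[m] fun ω => settlePoint B fun s => S s ω := by
  have h_mem (n : ℕ) : MeasurableSet[m] {ω | S n ω ∈ B} := hS n B.to_countable.measurableSet
  have h_time : Measurable[m] fun ω => sInf {n | S n ω ∉ B} := by
    refine measurable_of_Ioi fun n => ?_
    have h_lt : (fun ω => sInf {n | S n ω ∉ B}) ⁻¹' Set.Ioi n =
        {ω | (∃ k, S k ω ∉ B) ∧ ∀ k ≤ n, S k ω ∈ B} := by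
      ext ω
      refine ⟨fun h => ⟨Nat.nonempty_of_pos_sInf (n.zero_le.trans_lt h), fun k hk =>
        not_not.1 (Nat.notMem_of_lt_sInf (hk.trans_lt h))⟩, fun ⟨hex, h⟩ => ?_⟩
      by_contra hle
      exact Nat.sInf_mem (s := {n | S n ω ∉ B}) hex (h _ (not_lt.1 hle))
    rw [h_lt]
    measurability
  exact (measurable_from_prod_countable_left (f := fun p : Ω × ℕ => S p.2 p.1) hS).comp
    (measurable_id.prodMk h_time)

variable [MeasurableSpace Ω] {P : Measure Ω} {v : ℤ × ℤ}

namespace IsCombWalk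

lemma measurableSet_survivalEvent (hS : IsCombWalk P S v) (B : Set (ℤ × ℤ)) (t : ℕ) :
    MeasurableSet (survivalEvent S B t) :=
  hS.measurable_pathUpTo t (Set.to_countable _).measurableSet

lemma measurable_stoppedTraj (hS : IsCombWalk P S v) (B : Set (ℤ × ℤ)) (t : ℕ) :
    Measurable fun ω => stoppedTraj B (fun s => S s ω) t := by
  induction t with
  | zero => exact hS.2.1 0
  | succ t ih =>
    refine Measurable.ite ?_ (hS.2.1 _) ih
    simp only [← mem_survivalEvent]
    exact hS.measurableSet_survivalEvent B t

lemma lintegral_stoppedTraj_succ_le (hS : IsCombWalk P S v) {B : Set (ℤ × ℤ)}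
    {f : ℤ × ℤ → ℝ≥0∞} {ε : ℝ≥0∞} (hf : ∀ w ∈ B, combAvg f w + ε ≤ f w) (t : ℕ) :
    ∫⁻ ω, f (stoppedTraj B (fun s => S s ω) (t + 1)) ∂P + ε * P (survivalEvent S B t) ≤
      ∫⁻ ω, f (stoppedTraj B (fun s => S s ω) t) ∂P := by
  have h_meas := hS.measurableSet_survivalEvent B t
  rw [← lintegral_add_compl _ h_meas, ← lintegral_add_compl (fun ω => f (stoppedTraj B _ t)) h_meas,
    add_right_comm]
  refine add_le_add ?_ (setLIntegral_congr_fun h_meas.compl fun ω hω => ?_).le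
  · calc ∫⁻ ω in survivalEvent S B t, f (stoppedTraj B (fun s => S s ω) (t + 1)) ∂P +
          ε * P (survivalEvent S B t)
        = ∫⁻ ω in survivalEvent S B t, f (S (t + 1) ω) ∂P + ε * P (survivalEvent S B t) := by
          congr 1
          refine setLIntegral_congr_fun h_meas fun ω hω => ?_
          simp only [stoppedTraj, if_pos (mem_survivalEvent.1 hω)]
      _ = ∫⁻ ω in survivalEvent S B t, combAvg f (S t ω) + ε ∂P := by
          rw [survivalEvent, hS.setLIntegral_succ, lintegral_add_right _ measurable_const,
            setLIntegral_const]
      _ ≤ ∫⁻ ω in survivalEvent S B t, f (stoppedTraj B (fun s => S s ω) t) ∂P := by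
          refine setLIntegral_mono
            ((measurable_of_countable f).comp (hS.measurable_stoppedTraj B t)) fun ω hω => ?_
          rw [mem_survivalEvent] at hω
          rw [stoppedTraj_eq_self hω]
          exact hf _ (hω t le_rfl)
  · simp only [stoppedTraj, if_neg (mem_survivalEvent.not.1 hω)]

lemma lintegral_stoppedTraj_le (hS : IsCombWalk P S v) {B : Set (ℤ × ℤ)}
    {f : ℤ × ℤ → ℝ≥0∞} {ε : ℝ≥0∞} (hf : ∀ w ∈ B, combAvg f w + ε ≤ f w) (t : ℕ) :
    ∫⁻ ω, f (stoppedTraj B (fun s => S s ω) t) ∂P +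
      ∑ s ∈ Finset.range t, ε * P (survivalEvent S B s) ≤ f v := by
  have := hS.1
  induction t with
  | zero =>
    have h_start : ∫⁻ ω, f (stoppedTraj B (fun s => S s ω) 0) ∂P = ∫⁻ _, f v ∂P :=
      lintegral_congr_ae (hS.ae_zero_eq.mono fun ω hω => congrArg f hω)
    simp [h_start]
  | succ t ih =>
    rw [Finset.sum_range_succ, add_comm (∑ s ∈ _, _), ← add_assoc]
    exact (add_le_add_left (hS.lintegral_stoppedTraj_succ_le hf t) _).trans ih

theorem ae_exists_notMem_of_drift (hS : IsCombWalk P S v) {B : Set (ℤ × ℤ)}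
    {f : ℤ × ℤ → ℝ≥0∞} (hfv : f v ≠ ⊤) {ε : ℝ≥0∞} (hε : ε ≠ 0)
    (hf : ∀ w ∈ B, combAvg f w + ε ≤ f w) : ∀ᵐ ω ∂P, ∃ n, S n ω ∉ B := by
  have h_sum : ∑' _ : ℕ, ε * P {ω | ∀ n, S n ω ∈ B} ≤ f v := by
    refine ENNReal.tsum_le_of_sum_range_le fun t => ?_
    refine (Finset.sum_le_sum fun s _ => ?_).trans
      (le_add_self.trans (hS.lintegral_stoppedTraj_le hf t))
    gcongr
    exact fun ω hω => mem_survivalEvent.2 fun s _ => hω s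
  have h_null : ε * P {ω | ∀ n, S n ω ∈ B} = 0 := by
    by_contra h
    rw [ENNReal.tsum_const_eq_top_of_ne_zero h, top_le_iff] at h_sum
    exact hfv h_sum
  rw [ae_iff]
  simpa only [not_exists, not_not] using (mul_eq_zero.1 h_null).resolve_left hε

lemma ae_exists_notMem (hS : IsCombWalk P S v) (B : Finset (ℤ × ℤ)) :
    ∀ᵐ ω ∂P, ∃ n, S n ω ∉ B := by
  obtain ⟨f, hf_top, hf_drift⟩ := exists_lyapunov B
  exact hS.ae_exists_notMem_of_drift (B := B) (hf_top v) (by norm_num) hf_drift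

theorem lintegral_settlePoint_le (hS : IsCombWalk P S v) {B : Finset (ℤ × ℤ)}
    {f : ℤ × ℤ → ℝ≥0∞} (hf : ∀ w ∈ B, combAvg f w ≤ f w) :
    ∫⁻ ω, f (settlePoint B fun s => S s ω) ∂P ≤ f v := by
  have h_stopped (t : ℕ) : ∫⁻ ω, f (stoppedTraj B (fun s => S s ω) t) ∂P ≤ f v :=
    le_self_add.trans (hS.lintegral_stoppedTraj_le (B := B) (ε := 0) (by simpa using hf) t)
  calc ∫⁻ ω, f (settlePoint B fun s => S s ω) ∂P
      ≤ ∫⁻ ω, Filter.liminf (fun t => f (stoppedTraj B (fun s => S s ω) t)) Filter.atTop ∂P := by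
        refine lintegral_mono_ae ((hS.ae_exists_notMem B).mono fun ω hω => ?_)
        refine (Filter.Tendsto.liminf_eq (tendsto_const_nhds.congr' ?_)).ge
        filter_upwards [Filter.eventually_ge_atTop (sInf {n | S n ω ∉ (B : Set (ℤ × ℤ))})] with t ht
        rw [stoppedTraj_eq_settlePoint hω ht]
    _ ≤ Filter.liminf (fun t => ∫⁻ ω, f (stoppedTraj B (fun s => S s ω) t) ∂P) Filter.atTop :=
        lintegral_liminf_le fun t =>
          (measurable_of_countable f).comp (hS.measurable_stoppedTraj B t)
    _ ≤ f v := Filter.liminf_le_of_le (by isBoundedDefault) fun b hb =>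
        let ⟨t, ht⟩ := hb.exists
        ht.trans (h_stopped t)

end IsCombWalk

end OptionalStopping

section Independence

open ProbabilityTheory

variable {Ω : Type*} [MeasurableSpace Ω] {P : Measure Ω} {W : ℕ → ℕ → Ω → ℤ × ℤ}

lemma measure_preimage_inter_eq_mul {α : Type*} [Countable α] [MeasurableSpace α]
    [MeasurableSingletonClass α] {X : Ω → α} (hX : Measurable X) {B : Set Ω}
    {c : ℝ≥0∞} (h : ∀ x, P (X ⁻¹' {x} ∩ B) = P (X ⁻¹' {x}) * c) (s : Set α) :
    P (X ⁻¹' s ∩ B) = P (X ⁻¹' s) * c := by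
  have h_map : (P.restrict B).map X = c • P.map X := by
    refine Measure.ext_iff_singleton.2 fun x => ?_
    rw [Measure.smul_apply, Measure.map_apply hX (measurableSet_singleton x),
      Measure.map_apply hX (measurableSet_singleton x),
      Measure.restrict_apply (hX (measurableSet_singleton x)), h, smul_eq_mul, mul_comm]
  have hs : MeasurableSet s := s.to_countable.measurableSet
  have h_apply := congrArg (fun ν => ν s) h_map
  simpa only [Measure.smul_apply, Measure.map_apply hX hs, Measure.restrict_apply (hX hs),
    smul_eq_mul, mul_comm c] using h_apply

/-- The first `n + 1` positions of each of the first `k` walks. -/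
def pathsUpTo {Ω : Type*} (W : ℕ → ℕ → Ω → ℤ × ℤ) (k n : ℕ) (ω : Ω) :
    Fin k → Fin (n + 1) → ℤ × ℤ :=
  fun i t => W i t ω

/-- The σ-algebra generated by the first `k` walks. -/
abbrev pastWalks {Ω : Type*} (W : ℕ → ℕ → Ω → ℤ × ℤ) (k : ℕ) : MeasurableSpace Ω :=
  ⨆ n, MeasurableSpace.comap (pathsUpTo W k n) inferInstance

lemma measurable_pastWalks {Ω : Type*} (W : ℕ → ℕ → Ω → ℤ × ℤ) {i k : ℕ} (hi : i < k) (t : ℕ) :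
    Measurable[pastWalks W k] (W i t) := by
  have h_eval : Measurable fun p : Fin k → Fin (t + 1) → ℤ × ℤ => p ⟨i, hi⟩ (Fin.last t) :=
    measurable_of_countable _
  exact (h_eval.comp (comap_measurable (pathsUpTo W k t))).mono (le_iSup_of_le t le_rfl) le_rfl

namespace IsIIDCombWalks

lemma measurable_pathsUpTo (hW : IsIIDCombWalks P W) (k n : ℕ) : Measurable (pathsUpTo W k n) :=
  measurable_pi_lambda _ fun i => measurable_pi_lambda _ fun t => hW.2.1 i t

lemma measurable_pathUpTo (hW : IsIIDCombWalks P W) (k n : ℕ) : Measurable (pathUpTo (W k) n) :=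
  measurable_pi_lambda _ fun t => hW.2.1 k t

lemma measure_pathsUpTo_eq (hW : IsIIDCombWalks P W) {k n : ℕ} (p : Fin k → Fin (n + 1) → ℤ × ℤ) :
    P (pathsUpTo W k n ⁻¹' {p}) = ∏ i, pathProb (0, 0) (p i) := by
  rw [← hW.2.2 k n p]
  congr 1
  ext ω
  simp [pathsUpTo, funext_iff]

lemma measure_paths_inter_path (hW : IsIIDCombWalks P W) {k n : ℕ}
    (s : Set (Fin k → Fin (n + 1) → ℤ × ℤ)) (q : Fin (n + 1) → ℤ × ℤ) :
    P (pathsUpTo W k n ⁻¹' s ∩ pathUpTo (W k) n ⁻¹' {q}) =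
      P (pathsUpTo W k n ⁻¹' s) * pathProb (0, 0) q := by
  refine measure_preimage_inter_eq_mul (hW.measurable_pathsUpTo k n) (fun p => ?_) s
  have h_snoc : pathsUpTo W k n ⁻¹' {p} ∩ pathUpTo (W k) n ⁻¹' {q} =
      pathsUpTo W (k + 1) n ⁻¹' {Fin.snoc p q} := by
    ext ω
    simp only [Set.mem_inter_iff, Set.mem_preimage, Set.mem_singleton_iff, funext_iff (f := _)
      (g := (Fin.snoc p q : Fin (k + 1) → Fin (n + 1) → ℤ × ℤ)), Fin.forall_fin_succ']
    simp [pathsUpTo, pathUpTo, funext_iff]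
  rw [h_snoc, hW.measure_pathsUpTo_eq, hW.measure_pathsUpTo_eq, Fin.prod_univ_castSucc]
  simp only [Fin.snoc_castSucc, Fin.snoc_last]

lemma measure_pathUpTo_eq (hW : IsIIDCombWalks P W) {k n : ℕ} (q : Fin (n + 1) → ℤ × ℤ) :
    P (pathUpTo (W k) n ⁻¹' {q}) = pathProb (0, 0) q := by
  have := hW.1
  simpa using hW.measure_paths_inter_path (k := k) Set.univ q

lemma indepFun_pathsUpTo (hW : IsIIDCombWalks P W) (k n t : ℕ) :
    IndepFun (pathsUpTo W k n) (pathUpTo (W k) t) P := by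
  have := hW.1
  let m := max n t
  have h_same : IndepFun (pathsUpTo W k m) (pathUpTo (W k) m) P := by
    refine indepFun_iff_measure_inter_preimage_eq_mul.2 fun s u _ _ => ?_
    rw [Set.inter_comm, mul_comm]
    refine measure_preimage_inter_eq_mul (hW.measurable_pathUpTo k m) (fun q => ?_) u
    rw [Set.inter_comm, hW.measure_paths_inter_path, hW.measure_pathUpTo_eq, mul_comm]
  exact h_same.comp
    (φ := fun p i j => p i (Fin.castLE (Nat.succ_le_succ (le_max_left n t)) j))
    (ψ := fun q j => q (Fin.castLE (Nat.succ_le_succ (le_max_right n t)) j))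
    (measurable_of_countable _) (measurable_of_countable _)

lemma indep_pastWalks (hW : IsIIDCombWalks P W) (k t : ℕ) :
    Indep (pastWalks W k) (MeasurableSpace.comap (pathUpTo (W k) t) inferInstance) P := by
  have := hW.1
  refine indep_iSup_of_monotone (fun n => hW.indepFun_pathsUpTo k n t)
    (fun n => (hW.measurable_pathsUpTo k n).comap_le) (hW.measurable_pathUpTo k t).comap_le ?_
  intro n m hnm
  have h_restrict : pathsUpTo W k n =
      (fun p i j => p i (Fin.castLE (Nat.succ_le_succ hnm) j)) ∘ pathsUpTo W k m := rfl
  dsimp only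
  rw [h_restrict, ← MeasurableSpace.comap_comp]
  exact MeasurableSpace.comap_mono (measurable_of_countable _).comap_le

theorem isCombWalk_cond (hW : IsIIDCombWalks P W) {k : ℕ} {F : Set Ω}
    (hF : MeasurableSet[pastWalks W k] F) (hPF : P F ≠ 0) : IsCombWalk P[|F] (W k) (0, 0) := by
  have := hW.1
  refine ⟨cond_isProbabilityMeasure hPF, hW.2.1 k, fun t q => ?_⟩
  have h_event : {ω | ∀ i : Fin (t + 1), W k i ω = q i} = pathUpTo (W k) t ⁻¹' {q} := by
    ext ω
    exact funext_iff.symm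
  have hF' : MeasurableSet F :=
    iSup_le (fun n => (hW.measurable_pathsUpTo k n).comap_le) F hF
  have h_indep := (Indep_iff _ _ _).1 (hW.indep_pastWalks k t) F _ hF
    ⟨{q}, measurableSet_singleton q, rfl⟩
  rw [h_event, cond_apply hF', h_indep, hW.measure_pathUpTo_eq, ← mul_assoc,
    ENNReal.inv_mul_cancel hPF (measure_ne_top P F), one_mul]

end IsIIDCombWalks

end Independence

/-! ### The supermartingale of the growing cluster -/

section Supermartingale

open ProbabilityTheory

variable {Ω : Type*}

/-- The internal DLA cluster as a `Finset`. -/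
noncomputable def dlaFinset (W : ℕ → ℕ → ℤ × ℤ) : ℕ → Finset (ℤ × ℤ)
  | 0 => ∅
  | k + 1 => insert (settlePoint (dlaFinset W k) (W k)) (dlaFinset W k)

lemma coe_dlaFinset (W : ℕ → ℕ → ℤ × ℤ) (k : ℕ) :
    (dlaFinset W k : Set (ℤ × ℤ)) = dlaCluster W k := by
  induction k with
  | zero => exact Finset.coe_empty
  | succ k ih => rw [dlaFinset, dlaCluster, Finset.coe_insert, ih, Set.union_singleton]

lemma measurable_dlaFinset {m : MeasurableSpace Ω} {W : ℕ → ℕ → Ω → ℤ × ℤ} {k : ℕ}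
    (hW : ∀ i < k, ∀ t, Measurable[m] (W i t)) :
    Measurable[m, ⊤] fun ω => dlaFinset (fun i t => W i t ω) k := by
  induction k with
  | zero => exact measurable_const
  | succ k ih =>
    let : MeasurableSpace (Finset (ℤ × ℤ)) := ⊤
    have h_old : Measurable fun ω => dlaFinset (fun i t => W i t ω) k :=
      ih fun i hi => hW i (Nat.lt_succ_of_lt hi)
    let step : Ω × Finset (ℤ × ℤ) → Finset (ℤ × ℤ) := fun p =>
      insert (settlePoint p.2 fun s => W k s p.1) p.2
    have h_step : Measurable step := measurable_from_prod_countable_left fun B =>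
      (measurable_of_countable fun w => insert w B).comp
        (measurable_settlePoint (hW k k.lt_succ_self) B)
    have h_succ : (fun ω => dlaFinset (fun i t => W i t ω) (k + 1)) =
        step ∘ fun ω => (ω, dlaFinset (fun i t => W i t ω) k) := rfl
    rw [h_succ]
    exact h_step.comp (measurable_id.prodMk h_old)

variable [MeasurableSpace Ω] {P : Measure Ω} {W : ℕ → ℕ → Ω → ℤ × ℤ}

namespace IsIIDCombWalks

lemma isCombWalk (hW : IsIIDCombWalks P W) (k : ℕ) : IsCombWalk P (W k) (0, 0) := by
  have := hW.1
  simpa using hW.isCombWalk_cond (k := k) (F := Set.univ) MeasurableSet.univ (by simp)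

lemma setLIntegral_settlePoint_le (hW : IsIIDCombWalks P W) {k : ℕ} {F : Set Ω}
    (hF : MeasurableSet[pastWalks W k] F) {B : Finset (ℤ × ℤ)} {f : ℤ × ℤ → ℝ≥0∞}
    (hf : ∀ v ∈ B, combAvg f v ≤ f v) :
    ∫⁻ ω in F, f (settlePoint B fun s => W k s ω) ∂P ≤ f (0, 0) * P F := by
  have := hW.1
  rcases eq_or_ne (P F) 0 with hPF | hPF
  · rw [setLIntegral_measure_zero _ _ hPF]
    exact zero_le
  · have h_cond := (hW.isCombWalk_cond hF hPF).lintegral_settlePoint_le hf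
    rwa [ProbabilityTheory.cond, lintegral_smul_measure, smul_eq_mul, mul_comm, ← div_eq_mul_inv,
      ENNReal.div_le_iff hPF (measure_ne_top P F)] at h_cond

lemma setLIntegral_prod_dlaFinset_succ_le (hW : IsIIDCombWalks P W) {g : ℤ × ℤ → ℝ≥0∞}
    (hg : ∀ v, g v ≠ 0 → combAvg g v ≤ g v) (k : ℕ) (B : Finset (ℤ × ℤ)) :
    ∫⁻ ω in {ω | dlaFinset (fun i t => W i t ω) k = B},
        ∏ y ∈ dlaFinset (fun i t => W i t ω) (k + 1), g y ∂P ≤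
      g (0, 0) * ∫⁻ ω in {ω | dlaFinset (fun i t => W i t ω) k = B},
        ∏ y ∈ dlaFinset (fun i t => W i t ω) k, g y ∂P := by
  set F : Set Ω := {ω | dlaFinset (fun i t => W i t ω) k = B}
  have hF_past : MeasurableSet[pastWalks W k] F :=
    measurable_dlaFinset (fun i hi t => measurable_pastWalks W hi t)
      (show MeasurableSet[⊤] {B} from trivial)
  have hF : MeasurableSet F :=
    measurable_dlaFinset (fun i _ t => hW.2.1 i t) (show MeasurableSet[⊤] {B} from trivial)
  have h_new : ∀ᵐ ω ∂P.restrict F, ∏ y ∈ dlaFinset (fun i t => W i t ω) (k + 1), g y =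
      (∏ y ∈ B, g y) * g (settlePoint B fun s => W k s ω) := by
    filter_upwards [ae_restrict_of_ae ((hW.isCombWalk k).ae_exists_notMem B),
      ae_restrict_mem hF] with ω h_exit hω
    have h_notMem : settlePoint B (fun s => W k s ω) ∉ B :=
      Nat.sInf_mem (s := {n | W k n ω ∉ (B : Set (ℤ × ℤ))}) h_exit
    rw [dlaFinset, show dlaFinset (fun i t => W i t ω) k = B from hω,
      Finset.prod_insert h_notMem, mul_comm]
  have h_old : ∫⁻ ω in F, ∏ y ∈ dlaFinset (fun i t => W i t ω) k, g y ∂P =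
      (∏ y ∈ B, g y) * P F := by
    rw [← setLIntegral_const]
    exact setLIntegral_congr_fun hF fun ω hω => by
      rw [show dlaFinset (fun i t => W i t ω) k = B from hω]
  have h_meas : Measurable fun ω => g (settlePoint B fun s => W k s ω) :=
    (measurable_of_countable g).comp (measurable_settlePoint (hW.2.1 k) B)
  rw [lintegral_congr_ae h_new, h_old, lintegral_const_mul _ h_meas, mul_left_comm]
  by_cases h_zero : ∃ y ∈ B, g y = 0
  · simp only [Finset.prod_eq_zero_iff.2 h_zero, zero_mul, le_refl]
  · push Not at h_zero
    gcongr
    exact hW.setLIntegral_settlePoint_le hF_past fun v hv => hg v (h_zero v hv)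

theorem lintegral_prod_dlaFinset_le (hW : IsIIDCombWalks P W) {g : ℤ × ℤ → ℝ≥0∞}
    (hg : ∀ v, g v ≠ 0 → combAvg g v ≤ g v) (k : ℕ) :
    ∫⁻ ω, ∏ y ∈ dlaFinset (fun i t => W i t ω) k, g y ∂P ≤ g (0, 0) ^ k := by
  have := hW.1
  induction k with
  | zero => simp [dlaFinset]
  | succ k ih =>
    let F : Finset (ℤ × ℤ) → Set Ω := fun B => {ω | dlaFinset (fun i t => W i t ω) k = B}
    have hF (B : Finset (ℤ × ℤ)) : MeasurableSet (F B) :=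
      measurable_dlaFinset (fun i _ t => hW.2.1 i t) (show MeasurableSet[⊤] {B} from trivial)
    have h_decomp (f : Ω → ℝ≥0∞) : ∫⁻ ω, f ω ∂P = ∑' B, ∫⁻ ω in F B, f ω ∂P := by
      have h_cover : ⋃ B, F B = Set.univ := Set.iUnion_eq_univ_iff.2 fun ω => ⟨_, rfl⟩
      rw [← lintegral_iUnion hF fun B B' hne => Set.disjoint_left.2 fun ω h h' =>
        hne ((show _ = B from h).symm.trans h'), h_cover, setLIntegral_univ]
    calc ∫⁻ ω, ∏ y ∈ dlaFinset (fun i t => W i t ω) (k + 1), g y ∂P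
        ≤ g (0, 0) * ∫⁻ ω, ∏ y ∈ dlaFinset (fun i t => W i t ω) k, g y ∂P := by
          rw [h_decomp, h_decomp, ← ENNReal.tsum_mul_left]
          exact ENNReal.tsum_le_tsum (hW.setLIntegral_prod_dlaFinset_succ_le hg k)
      _ ≤ g (0, 0) ^ (k + 1) := by
          rw [pow_succ']
          gcongr

end IsIIDCombWalks

lemma exp_neg_add_sq_le_one_sub {x : ℝ} (h0 : 0 ≤ x) (h1 : x ≤ 1 / 2) :
    Real.exp (-(x + x ^ 2)) ≤ 1 - x := by
  rw [Real.exp_neg, inv_le_comm₀ (Real.exp_pos _) (by linarith)]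
  refine le_trans ?_ (Real.quadratic_le_exp_of_nonneg (x := x + x ^ 2) (by positivity))
  rw [inv_le_iff_one_le_mul₀ (by linarith)]
  have h_rest : 0 ≤ x ^ 2 * (1 - x - x ^ 2 - x ^ 3) :=
    mul_nonneg (sq_nonneg x) (by nlinarith [sq_nonneg x])
  nlinarith

lemma ofReal_exp_neg_sum_le_prod {h : ℤ × ℤ → ℝ} (h_nonneg : ∀ w, 0 ≤ h w)
    (h_le : ∀ w, h w ≤ 1 / 2) (h_fin : h.HasFiniteSupport) (B : Finset (ℤ × ℤ)) :
    ENNReal.ofReal (Real.exp (-(∑' w, h w + ∑' w, h w ^ 2))) ≤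
      ∏ y ∈ B, ENNReal.ofReal (1 - h y) := by
  have h_sum : Summable h := summable_of_hasFiniteSupport h_fin
  have h_sum_sq : Summable fun w => h w ^ 2 :=
    summable_of_hasFiniteSupport (h_fin.subset fun w hw => by simpa using hw)
  rw [← ENNReal.ofReal_prod_of_nonneg fun y _ => by linarith [h_le y]]
  refine ENNReal.ofReal_le_ofReal ?_
  calc Real.exp (-(∑' w, h w + ∑' w, h w ^ 2))
      ≤ Real.exp (∑ y ∈ B, -(h y + h y ^ 2)) := by
        rw [Finset.sum_neg_distrib, Finset.sum_add_distrib]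
        gcongr
        · exact h_sum.sum_le_tsum B fun w _ => h_nonneg w
        · exact h_sum_sq.sum_le_tsum B fun w _ => sq_nonneg _
    _ ≤ ∏ y ∈ B, (1 - h y) := by
        rw [Real.exp_sum]
        exact Finset.prod_le_prod (fun y _ => (Real.exp_pos _).le) fun y _ =>
          exp_neg_add_sq_le_one_sub (h_nonneg y) (h_le y)

lemma combAvg_update_zero_le {u : ℤ × ℤ → ℝ≥0∞} {z v : ℤ × ℤ} (hv : v ≠ z)
    (hu : combAvg u v ≤ u v) :
    combAvg (Function.update u z 0) v ≤ Function.update u z 0 v := by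
  rw [Function.update_of_ne hv]
  refine le_trans (ENNReal.tsum_le_tsum fun w => ?_) hu
  gcongr
  exact update_le_self_iff.2 zero_le w

theorem IsIIDCombWalks.measure_notMem_dlaCluster_le (hW : IsIIDCombWalks P W) {z : ℤ × ℤ}
    {h : ℤ × ℤ → ℝ} (h_nonneg : ∀ w, 0 ≤ h w) (h_le : ∀ w, h w ≤ 1 / 2) (h_fin : h.HasFiniteSupport)
    (h_sub : ∀ w ≠ z, 0 ≤ combLaplacian h w) (d : ℕ) :
    P {ω | z ∉ dlaCluster (fun i t => W i t ω) d} ≤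
      ENNReal.ofReal (Real.exp (-(d * h (0, 0) - ∑' w, h w - ∑' w, h w ^ 2))) := by
  set C : ℝ := ∑' w, h w + ∑' w, h w ^ 2 with hC
  let u : ℤ × ℤ → ℝ≥0∞ := fun w => ENNReal.ofReal (1 - h w)
  let g : ℤ × ℤ → ℝ≥0∞ := Function.update u z 0
  have hg_super (v : ℤ × ℤ) (hv : g v ≠ 0) : combAvg g v ≤ g v := by
    have hvz : v ≠ z := fun hvz => hv (by rw [hvz]; exact Function.update_self ..)
    exact combAvg_update_zero_le hvz
      (combAvg_one_sub_le (fun w => by linarith [h_le w]) (h_sub v hvz))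
  have h_markov : ENNReal.ofReal (Real.exp (-C)) * P {ω | z ∉ dlaCluster (fun i t => W i t ω) d} ≤
      ∫⁻ ω, ∏ y ∈ dlaFinset (fun i t => W i t ω) d, g y ∂P := by
    have h_meas : Measurable fun ω => ∏ y ∈ dlaFinset (fun i t => W i t ω) d, g y :=
      (measurable_from_top (f := fun B : Finset (ℤ × ℤ) => ∏ y ∈ B, g y)).comp
        (measurable_dlaFinset fun i _ t => hW.2.1 i t)
    refine le_trans ?_ (mul_meas_ge_le_lintegral h_meas (ENNReal.ofReal (Real.exp (-C))))
    gcongr with ω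
    intro hω
    have h_prod : ∏ y ∈ dlaFinset (fun i t => W i t ω) d, g y =
        ∏ y ∈ dlaFinset (fun i t => W i t ω) d, u y :=
      Finset.prod_update_of_notMem (by rwa [← Finset.mem_coe, coe_dlaFinset]) u 0
    exact (ofReal_exp_neg_sum_le_prod h_nonneg h_le h_fin _).trans h_prod.ge
  have h_origin : g (0, 0) ^ d ≤ ENNReal.ofReal (Real.exp (-(d * h (0, 0)))) := by
    have h_zero : g (0, 0) ≤ u (0, 0) := update_le_self_iff.2 zero_le _
    rw [← mul_neg, Real.exp_nat_mul, ENNReal.ofReal_pow (Real.exp_pos _).le]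
    exact pow_le_pow_left' (h_zero.trans
      (ENNReal.ofReal_le_ofReal (Real.one_sub_le_exp_neg _))) d
  have h_bound := (h_markov.trans (hW.lintegral_prod_dlaFinset_le hg_super d)).trans h_origin
  rw [mul_comm, ← ENNReal.le_div_iff_mul_le (by simp [Real.exp_pos]) (by simp),
    ← ENNReal.ofReal_div_of_pos (Real.exp_pos _), ← Real.exp_sub] at h_bound
  refine h_bound.trans_eq ?_
  rw [hC]
  ring_nf

end Supermartingale

/-! ### Summation by parts and barriers -/

section GreenIdentity

/-- The second difference of `h` along the orbits of the permutation `e`. -/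
def permLaplacian {α : Type*} (e : Equiv.Perm α) (h : α → ℝ) (w : α) : ℝ :=
  h (e w) + h (e.symm w) - 2 * h w

lemma hasFiniteSupport_permLaplacian {α : Type*} (e : Equiv.Perm α) {h : α → ℝ}
    (hh : h.HasFiniteSupport) : (permLaplacian e h).HasFiniteSupport :=
  ((hh.fun_comp_of_injective e.injective).fun_add
    (hh.fun_comp_of_injective e.symm.injective)).fun_sub (hh.mul_right fun _ => 2)

lemma tsum_mul_permLaplacian_comm {α : Type*} (e : Equiv.Perm α) {c H : α → ℝ}
    (hc : ∀ w, c (e w) = c w) (hH : H.HasFiniteSupport) (V : α → ℝ) :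
    ∑' w, H w * (c w * permLaplacian e V w) = ∑' w, V w * (c w * permLaplacian e H w) := by
  let flux : α → ℝ := fun w => c w * (H w * V (e w) - V w * H (e w))
  have h_flux : Summable flux := summable_of_hasFiniteSupport <| .mul_right c <|
    (hH.mul_left fun w => V (e w)).fun_sub
      ((hH.fun_comp_of_injective e.injective).mul_right V)
  have h_flux_symm : Summable fun w => flux (e.symm w) := e.symm.summable_iff.2 h_flux
  have h_left : Summable fun w => H w * (c w * permLaplacian e V w) :=
    summable_of_hasFiniteSupport (hH.mul_left _)
  have h_right : Summable fun w => V w * (c w * permLaplacian e H w) :=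
    summable_of_hasFiniteSupport (.mul_right _ (.mul_right _ (hasFiniteSupport_permLaplacian e hH)))
  have h_diff (w : α) : H w * (c w * permLaplacian e V w) - V w * (c w * permLaplacian e H w) =
      flux w - flux (e.symm w) := by
    have hc_symm : c (e.symm w) = c w := by rw [← hc, e.apply_symm_apply]
    simp only [flux, permLaplacian, e.apply_symm_apply, hc_symm]
    ring
  rw [← sub_eq_zero, ← h_left.tsum_sub h_right, tsum_congr h_diff,
    h_flux.tsum_sub h_flux_symm, e.symm.tsum_eq, sub_self]

/-- Translation by one along the teeth. -/
def shiftUp : Equiv.Perm (ℤ × ℤ) := (Equiv.refl ℤ).prodCongr (Equiv.addRight 1)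

/-- Translation by one along the spine. -/
def shiftRight : Equiv.Perm (ℤ × ℤ) := (Equiv.addRight 1).prodCongr (Equiv.refl ℤ)

lemma combLaplacian_eq_permLaplacian (h : ℤ × ℤ → ℝ) (w : ℤ × ℤ) :
    combLaplacian h w = 1 * permLaplacian shiftUp h w +
      (if w.2 = 0 then 1 else 0) * permLaplacian shiftRight h w := by
  obtain ⟨x, y⟩ := w
  by_cases hy : y = 0 <;>
    simp [combLaplacian, secondDiff, permLaplacian, shiftUp, shiftRight, hy, sub_eq_add_neg]

lemma hasFiniteSupport_combLaplacian {h : ℤ × ℤ → ℝ} (hh : h.HasFiniteSupport) :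
    (combLaplacian h).HasFiniteSupport := by
  rw [funext (combLaplacian_eq_permLaplacian h)]
  exact .fun_add (.mul_right _ (hasFiniteSupport_permLaplacian _ hh))
    (.mul_right _ (hasFiniteSupport_permLaplacian _ hh))

theorem tsum_mul_combLaplacian_comm {H : ℤ × ℤ → ℝ} (hH : H.HasFiniteSupport) (V : ℤ × ℤ → ℝ) :
    ∑' w, H w * combLaplacian V w = ∑' w, V w * combLaplacian H w := by
  have h_up := tsum_mul_permLaplacian_comm shiftUp (c := fun _ => 1) (fun _ => rfl) hH V
  have h_right := tsum_mul_permLaplacian_comm shiftRight (c := fun w => if w.2 = 0 then 1 else 0)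
    (fun _ => rfl) hH V
  simp only [combLaplacian_eq_permLaplacian, mul_add]
  rw [Summable.tsum_add, Summable.tsum_add, h_up, h_right]
  all_goals first
    | exact summable_of_hasFiniteSupport (hH.mul_left _)
    | exact summable_of_hasFiniteSupport
        (.mul_right _ (.mul_right _ (hasFiniteSupport_permLaplacian _ hH)))

/-- If `V` solves `combLaplacian V ≥ 1 - d · 1₀`, as the odometer of a sandpile of mass `d` does,
Green's identity turns the discrepancy of `H` into the contribution of its pole `z`. -/
lemma neg_mul_combLaplacian_le_discrepancy {H V : ℤ × ℤ → ℝ} (hH_nonneg : ∀ w, 0 ≤ H w)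
    (hH : H.HasFiniteSupport) {d : ℝ} {z : ℤ × ℤ} (hV : ∀ w ≠ (0, 0), 1 ≤ combLaplacian V w)
    (hV_zero : 1 - d ≤ combLaplacian V (0, 0)) (hVH : ∀ w ≠ z, V w * combLaplacian H w ≤ 0) :
    -(V z * combLaplacian H z) ≤ d * H (0, 0) - ∑' w, H w := by
  have h_pole : ∑' w, V w * combLaplacian H w ≤ V z * combLaplacian H z := by
    have h_single := hasSum_pi_single z (V z * combLaplacian H z)
    refine hasSum_le (fun w => ?_) (Summable.hasSum (summable_of_hasFiniteSupport
      (.mul_right _ (hasFiniteSupport_combLaplacian hH)))) h_single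
    rcases eq_or_ne w z with rfl | hw
    · rw [Pi.single_eq_same]
    · rw [Pi.single_eq_of_ne hw]
      exact hVH w hw
  have h_source : ∑' w, H w - d * H (0, 0) ≤ ∑' w, H w * combLaplacian V w := by
    have h_single := hasSum_pi_single ((0, 0) : ℤ × ℤ) (d * H (0, 0))
    refine hasSum_le (fun w => ?_) ((summable_of_hasFiniteSupport hH).hasSum.sub h_single)
      (summable_of_hasFiniteSupport (hH.mul_left _)).hasSum
    rcases eq_or_ne w (0, 0) with rfl | hw
    · rw [Pi.single_eq_same, Pi.mul_apply]
      nlinarith [hH_nonneg (0, 0)]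
    · rw [Pi.single_eq_of_ne hw, Pi.mul_apply]
      nlinarith [hH_nonneg w, hV w hw]
  linarith [tsum_mul_combLaplacian_comm hH V]

end GreenIdentity

section Barrier

/-- A test function `H` with pole `z` for the event that `d` explorers miss `z`. The number
`d * H (0, 0) - ∑' w, H w` compares `d` explorers at the origin with a completely filled support
of `H`; `g`, `M` and `Q` bound this gap, the values and the energy of `H`. -/
structure IsBarrier (z : ℤ × ℤ) (d : ℕ) (g M Q : ℝ) (H : ℤ × ℤ → ℝ) : Prop where
  nonneg : ∀ w, 0 ≤ H w
  le : ∀ w, H w ≤ M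
  hasFiniteSupport : H.HasFiniteSupport
  subharmonic : ∀ w ≠ z, 0 ≤ combLaplacian H w
  gap : g ≤ d * H (0, 0) - ∑' w, H w
  energy : ∑' w, H w ^ 2 ≤ Q

/-- The reflections of the comb. -/
def reflect (ε δ : ℤˣ) : Equiv.Perm (ℤ × ℤ) := (Units.mulLeft ε).prodCongr (Units.mulLeft δ)

lemma reflect_apply (ε δ : ℤˣ) (w : ℤ × ℤ) : reflect ε δ w = (ε * w.1, δ * w.2) := rfl

lemma reflect_zero (ε δ : ℤˣ) : reflect ε δ (0, 0) = (0, 0) := by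
  simp [reflect_apply]

lemma combLaplacian_const_mul (s : ℝ) (h : ℤ × ℤ → ℝ) (w : ℤ × ℤ) :
    combLaplacian (fun v => s * h v) w = s * combLaplacian h w := by
  simp only [combLaplacian, secondDiff]
  split_ifs <;> ring

lemma secondDiff_comp_units_mul (f : ℤ → ℝ) (ε : ℤˣ) (x : ℤ) :
    secondDiff (fun t => f (ε * t)) x = secondDiff f (ε * x) := by
  rcases Int.units_eq_one_or ε with rfl | rfl
  · simp
  · simp only [secondDiff, Units.val_neg, Units.val_one, neg_one_mul]
    rw [neg_add', neg_sub', sub_neg_eq_add]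
    ring

lemma combLaplacian_comp_reflect (h : ℤ × ℤ → ℝ) (ε δ : ℤˣ) (w : ℤ × ℤ) :
    combLaplacian (fun v => h (reflect ε δ v)) w = combLaplacian h (reflect ε δ w) := by
  have h_axis : (δ : ℤ) * w.2 = 0 ↔ w.2 = 0 := by simp
  simp only [combLaplacian, reflect_apply, h_axis, mul_zero,
    ← secondDiff_comp_units_mul (fun y => h (ε * w.1, y)) δ,
    ← secondDiff_comp_units_mul (fun x => h (x, 0)) ε]

lemma exists_reflect_natAbs (z : ℤ × ℤ) :
    ∃ ε δ : ℤˣ, reflect ε δ z = (↑z.1.natAbs, ↑z.2.natAbs) := by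
  have h_unit (t : ℤ) : ∃ ε : ℤˣ, ε * t = t.natAbs := by
    rcases Int.natAbs_eq t with h | h
    · exact ⟨1, by simpa using h⟩
    · exact ⟨-1, by rw [Units.val_neg, Units.val_one]; omega⟩
  obtain ⟨ε, hε⟩ := h_unit z.1
  obtain ⟨δ, hδ⟩ := h_unit z.2
  exact ⟨ε, δ, by rw [reflect_apply, hε, hδ]⟩

namespace IsBarrier

variable {z : ℤ × ℤ} {d : ℕ} {g M Q : ℝ} {H : ℤ × ℤ → ℝ}

lemma mono_gap {g' : ℝ} (hH : IsBarrier z d g M Q H) (h : g' ≤ g) : IsBarrier z d g' M Q H :=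
  { hH with gap := h.trans hH.gap }

lemma comp_reflect {ε δ : ℤˣ} (hH : IsBarrier (reflect ε δ z) d g M Q H) :
    IsBarrier z d g M Q fun w => H (reflect ε δ w) where
  nonneg w := hH.nonneg _
  le w := hH.le _
  hasFiniteSupport := hH.hasFiniteSupport.fun_comp_of_injective (reflect ε δ).injective
  subharmonic w hw := by
    rw [combLaplacian_comp_reflect]
    exact hH.subharmonic _ ((reflect ε δ).injective.ne hw)
  gap := by
    rw [(reflect ε δ).tsum_eq H, reflect_zero]
    exact hH.gap
  energy := by
    rw [(reflect ε δ).tsum_eq fun w => H w ^ 2]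
    exact hH.energy

/-- The bound is the optimum over `s` of the exponential estimate for the test function `s • H`. -/
theorem measure_notMem_dlaCluster_le (hH : IsBarrier z d g M Q H) (hg : 0 ≤ g) (hQ : 0 < Q)
    (hgM : g * M ≤ Q) {Ω : Type*} [MeasurableSpace Ω] {P : Measure Ω} {W : ℕ → ℕ → Ω → ℤ × ℤ}
    (hW : IsIIDCombWalks P W) :
    P {ω | z ∉ dlaCluster (fun i t => W i t ω) d} ≤
      ENNReal.ofReal (Real.exp (-(g ^ 2 / (4 * Q)))) := by
  set s : ℝ := g / (2 * Q) with hs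
  have hs_nonneg : 0 ≤ s := by positivity
  have h_le (w : ℤ × ℤ) : s * H w ≤ 1 / 2 := by
    calc s * H w ≤ s * M := by gcongr; exact hH.le w
      _ = g * M / (2 * Q) := by ring
      _ ≤ 1 / 2 := by
        rw [div_le_div_iff₀ (by positivity) two_pos]
        linarith
  have h_sub (w : ℤ × ℤ) (hw : w ≠ z) : 0 ≤ combLaplacian (fun v => s * H v) w := by
    rw [combLaplacian_const_mul]
    exact mul_nonneg hs_nonneg (hH.subharmonic w hw)
  have h_main := hW.measure_notMem_dlaCluster_le (fun w => mul_nonneg hs_nonneg (hH.nonneg w)) h_le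
    (hH.hasFiniteSupport.mul_right _) h_sub d
  refine h_main.trans (ENNReal.ofReal_le_ofReal (Real.exp_le_exp.2 (neg_le_neg ?_)))
  simp only [mul_pow, tsum_mul_left]
  calc g ^ 2 / (4 * Q) = s * g - s ^ 2 * Q := by rw [hs]; field_simp; ring
    _ ≤ s * (d * H (0, 0) - ∑' w, H w) - s ^ 2 * ∑' w, H w ^ 2 := by
        gcongr
        exacts [hH.gap, hH.energy]
    _ = d * (s * H (0, 0)) - s * ∑' w, H w - s ^ 2 * ∑' w, H w ^ 2 := by ring

end IsBarrier

end Barrier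

/-! ### An explicit Green-type function -/

section SpineProfile

/-- Coefficient of the cubic `(N - x) ^ 3` in `spineProfile`. On each side of the pole,
`(N - |x|) ^ 3` solves the equation of the spine, and the increments of the coefficient keep the
discrete Wronskian constant between the origin and the pole; the initial value cancels the kink
of `(N - |x|) ^ 3` at the origin. -/
noncomputable def spineCoeff (N : ℕ) : ℕ → ℝ
  | 0 => 1 / ((N : ℝ) ^ 3 * (6 * (N : ℝ) ^ 2 + 2))
  | k + 1 => spineCoeff N k + 1 / (((N : ℝ) - k) ^ 3 * ((N : ℝ) - (k + 1)) ^ 3)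

/-- The values on the spine of the Green-type function with pole on the tooth of `p`, killed at
distance `N` from the origin. -/
noncomputable def spineProfile (N p : ℕ) (x : ℤ) : ℝ :=
  max 0 ((N : ℝ) - |(x : ℝ)|) ^ 3 * spineCoeff N (min x.toNat p)

variable {N p : ℕ}

lemma spineProfile_eq_zero {x : ℤ} (hx : (N : ℝ) ≤ |(x : ℝ)|) : spineProfile N p x = 0 := by
  rw [spineProfile, max_eq_left (sub_nonpos.2 hx), zero_pow three_ne_zero, zero_mul]

lemma spineProfile_natCast {k : ℕ} (hk : k ≤ N) :
    spineProfile N p k = ((N : ℝ) - k) ^ 3 * spineCoeff N (min k p) := by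
  have : (k : ℝ) ≤ N := mod_cast hk
  rw [spineProfile, Int.toNat_natCast, Int.cast_natCast, Nat.abs_cast,
    max_eq_right (sub_nonneg.2 this)]

lemma spineProfile_neg_natCast {k : ℕ} (hk : k ≤ N) :
    spineProfile N p (-k) = ((N : ℝ) - k) ^ 3 * spineCoeff N 0 := by
  have : (k : ℝ) ≤ N := mod_cast hk
  rw [spineProfile, Int.toNat_neg_natCast, Nat.zero_min, Int.cast_neg, abs_neg, Int.cast_natCast,
    Nat.abs_cast, max_eq_right (sub_nonneg.2 this)]

lemma spineCoeff_nonneg {k : ℕ} (hk : k ≤ N) : 0 ≤ spineCoeff N k := by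
  induction k with
  | zero => rw [spineCoeff]; positivity
  | succ k ih =>
    have h_width : (k : ℝ) + 1 ≤ N := mod_cast hk
    have h_left : 0 ≤ (N : ℝ) - k := by linarith
    have h_right : 0 ≤ (N : ℝ) - (k + 1) := by linarith
    rw [spineCoeff]
    exact add_nonneg (ih (Nat.le_of_succ_le hk))
      (one_div_nonneg.2 (mul_nonneg (pow_nonneg h_left 3) (pow_nonneg h_right 3)))

lemma one_div_pow_five_add_le {u : ℝ} (hu : 0 < u) :
    1 / (u + 1) ^ 5 + 1 / ((u + 1) ^ 3 * u ^ 3) ≤ 1 / u ^ 5 := by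
  rw [div_add_div _ _ (by positivity) (by positivity),
    div_le_div_iff₀ (by positivity) (by positivity), ← sub_nonneg]
  have h_diff : 1 * ((u + 1) ^ 5 * ((u + 1) ^ 3 * u ^ 3)) -
      (1 * ((u + 1) ^ 3 * u ^ 3) + (u + 1) ^ 5 * 1) * u ^ 5 =
      (u + 1) ^ 3 * u ^ 3 * (4 * u ^ 4 + 8 * u ^ 3 + 9 * u ^ 2 + 5 * u + 1) := by ring
  rw [h_diff]
  positivity

lemma spineCoeff_le {k : ℕ} (hk : k < N) : spineCoeff N k ≤ 1 / ((N : ℝ) - k) ^ 5 := by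
  induction k with
  | zero =>
    have : (0 : ℝ) < N := mod_cast hk
    rw [spineCoeff, Nat.cast_zero, sub_zero]
    refine one_div_le_one_div_of_le (by positivity) ?_
    nlinarith [pow_pos this 3, pow_pos this 5]
  | succ k ih =>
    have h_width : (k : ℝ) + 1 < N := mod_cast hk
    have h_step := one_div_pow_five_add_le (u := N - (k + 1)) (by linarith)
    rw [show (N : ℝ) - (k + 1) + 1 = N - k by ring] at h_step
    rw [spineCoeff, Nat.cast_succ]
    linarith [ih (Nat.lt_of_succ_lt hk)]

lemma spineProfile_nonneg (hp : p < N) (x : ℤ) : 0 ≤ spineProfile N p x := by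
  have := spineCoeff_nonneg ((min_le_right x.toNat p).trans hp.le)
  rw [spineProfile]
  positivity

lemma sub_cube_mul_add_sq_le {m t : ℝ} (ht : 0 ≤ t) (htm : t ≤ m) :
    (m - t) ^ 3 * (m + t) ^ 2 ≤ m ^ 5 := by
  have h_sub : 0 ≤ m - t := sub_nonneg.2 htm
  have h_prod : 0 ≤ (m - t) * (m + t) := mul_nonneg h_sub (by linarith)
  calc (m - t) ^ 3 * (m + t) ^ 2 = ((m - t) * (m + t)) ^ 2 * (m - t) := by ring
    _ ≤ (m ^ 2) ^ 2 * m := by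
        gcongr
        · nlinarith [sq_nonneg t]
        · linarith
    _ = m ^ 5 := by ring

lemma spineProfile_natCast_le (hp : p < N) {k : ℕ} (hk : k ≤ N) :
    spineProfile N p k * ((N : ℝ) - p + |(k : ℝ) - p|) ^ 2 ≤ 1 := by
  have h_le : (k : ℝ) ≤ N := mod_cast hk
  have h_pole : (p : ℝ) < N := mod_cast hp
  have : 0 ≤ ((N : ℝ) - k) ^ 3 := pow_nonneg (sub_nonneg.2 h_le) 3
  rw [spineProfile_natCast hk]
  rcases le_total p k with hpk | hkp
  · have h_abs : (p : ℝ) ≤ k := mod_cast hpk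
    rw [min_eq_right hpk, abs_of_nonneg (sub_nonneg.2 h_abs)]
    have h_cubic := sub_cube_mul_add_sq_le (sub_nonneg.2 h_abs) (sub_le_sub_right h_le (p : ℝ))
    rw [sub_sub_sub_cancel_right] at h_cubic
    calc ((N : ℝ) - k) ^ 3 * spineCoeff N p * (N - p + (k - p)) ^ 2
        ≤ ((N : ℝ) - k) ^ 3 * (1 / (N - p) ^ 5) * (N - p + (k - p)) ^ 2 := by
          gcongr
          exact spineCoeff_le hp
      _ = ((N : ℝ) - k) ^ 3 * (N - p + (k - p)) ^ 2 / (N - p) ^ 5 := by ring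
      _ ≤ 1 := div_le_one_of_le₀ h_cubic (pow_nonneg (sub_nonneg.2 h_pole.le) 5)
  · have h_abs : (k : ℝ) ≤ p := mod_cast hkp
    rw [min_eq_left hkp, abs_of_nonpos (sub_nonpos.2 h_abs),
      show (N : ℝ) - p + -(k - p) = N - k by ring]
    have h_width : 0 < (N : ℝ) - k := by linarith
    calc ((N : ℝ) - k) ^ 3 * spineCoeff N k * (N - k) ^ 2
        ≤ ((N : ℝ) - k) ^ 3 * (1 / (N - k) ^ 5) * (N - k) ^ 2 := by
          gcongr
          exact spineCoeff_le (hkp.trans_lt hp)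
      _ = 1 := by field_simp

lemma spineProfile_neg_natCast_le (hN : 0 < N) {k : ℕ} (hk : k ≤ N) :
    spineProfile N p (-k) * ((N : ℝ) + k) ^ 2 ≤ 1 := by
  have : (0 : ℝ) < N := mod_cast hN
  have h_cubic := sub_cube_mul_add_sq_le (m := N) k.cast_nonneg (mod_cast hk)
  have h_coeff := spineCoeff_le hN
  rw [Nat.cast_zero, sub_zero] at h_coeff
  rw [spineProfile_neg_natCast hk]
  calc ((N : ℝ) - k) ^ 3 * spineCoeff N 0 * (N + k) ^ 2
      = ((N : ℝ) - k) ^ 3 * (N + k) ^ 2 * spineCoeff N 0 := by ring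
    _ ≤ (N : ℝ) ^ 5 * (1 / (N : ℝ) ^ 5) := by
        gcongr
        exact spineCoeff_nonneg N.zero_le
    _ = 1 := by field_simp

lemma spineProfile_le (hp : p < N) (x : ℤ) :
    spineProfile N p x ≤ 1 / ((N : ℝ) - p + |(x : ℝ) - p|) ^ 2 := by
  have h_pole : (0 : ℝ) < N - p := sub_pos.2 (mod_cast hp)
  rcases le_or_gt (N : ℝ) |(x : ℝ)| with h_out | h_in
  · rw [spineProfile_eq_zero h_out]
    positivity
  rw [le_div_iff₀ (by positivity)]
  obtain ⟨k, rfl | rfl⟩ := x.eq_nat_or_neg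
  · rw [Int.cast_natCast, Nat.abs_cast] at h_in
    exact spineProfile_natCast_le hp (mod_cast h_in.le)
  · rw [Int.cast_neg, abs_neg, Int.cast_natCast, Nat.abs_cast] at h_in
    have h_dist : (N : ℝ) - p + |((-k : ℤ) : ℝ) - p| = N + k := by
      push_cast
      rw [abs_of_nonpos (by linarith [k.cast_nonneg (α := ℝ), p.cast_nonneg (α := ℝ)])]
      ring
    rw [h_dist]
    exact spineProfile_neg_natCast_le (Nat.zero_lt_of_lt hp) (mod_cast h_in.le)

lemma spineCoeff_min_succ (N p k : ℕ) : spineCoeff N (min (k + 1) p) = spineCoeff N (min k p) +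
    if k < p then 1 / (((N : ℝ) - k) ^ 3 * ((N : ℝ) - (k + 1)) ^ 3) else 0 := by
  split_ifs with hk
  · rw [min_eq_left (Nat.succ_le_of_lt hk), min_eq_left hk.le, spineCoeff]
  · rw [min_eq_right (by omega), min_eq_right (by omega), add_zero]

lemma secondDiff_spineProfile_natCast_succ (hp : p < N) {k : ℕ} (hk : k + 1 < N) :
    secondDiff (spineProfile N p) (k + 1 : ℕ) =
      6 * ((N : ℝ) - (k + 1)) * spineCoeff N (min (k + 1) p) -
        if k + 1 = p then 1 / ((N : ℝ) - (k + 1)) ^ 3 else 0 := by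
  have h_next : ((k + 1 : ℕ) : ℤ) + 1 = (k + 2 : ℕ) := by push_cast; ring
  have h_prev : ((k + 1 : ℕ) : ℤ) - 1 = k := by push_cast; ring
  have h_width : (k : ℝ) + 1 < N := mod_cast hk
  have h_here : (N : ℝ) - (k + 1) ≠ 0 := by linarith
  have h_left : (N : ℝ) - k ≠ 0 := by linarith
  rw [secondDiff, h_next, h_prev, spineProfile_natCast hk, spineProfile_natCast hk.le,
    spineProfile_natCast (by omega), spineCoeff_min_succ N p (k + 1), spineCoeff_min_succ N p k]
  push_cast
  rcases lt_trichotomy (k + 1) p with h | h | h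
  · have h_right : (N : ℝ) - (k + 1 + 1) ≠ 0 := by
      have : (k : ℝ) + 2 < N := mod_cast (by omega : k + 2 < N)
      linarith
    rw [if_pos h, if_pos (by omega), if_neg h.ne]
    field_simp
    ring
  · rw [if_neg h.not_lt, if_pos (by omega), if_pos h]
    field_simp
    ring
  · rw [if_neg h.not_gt, if_neg (by omega), if_neg h.ne']
    ring

lemma secondDiff_spineProfile_neg_natCast_succ {k : ℕ} (hk : k + 1 < N) :
    secondDiff (spineProfile N p) (-(k + 1 : ℕ)) =
      6 * ((N : ℝ) - (k + 1)) * spineCoeff N 0 := by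
  have h_next : -((k + 1 : ℕ) : ℤ) + 1 = -(k : ℕ) := by push_cast; ring
  have h_prev : -((k + 1 : ℕ) : ℤ) - 1 = -(k + 2 : ℕ) := by push_cast; ring
  rw [secondDiff, h_next, h_prev, spineProfile_neg_natCast hk, spineProfile_neg_natCast hk.le,
    spineProfile_neg_natCast (by omega)]
  push_cast
  ring

lemma secondDiff_spineProfile_zero (hp : p < N) :
    secondDiff (spineProfile N p) 0 =
      6 * N * spineCoeff N 0 - if p = 0 then 1 / (N : ℝ) ^ 3 else 0 := by
  have hN : 0 < N := Nat.zero_lt_of_lt hp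
  have h_pos : (N : ℝ) ≠ 0 := mod_cast hN.ne'
  have h_at_zero := spineProfile_natCast (p := p) hN.le
  have h_at_one := spineProfile_natCast (p := p) (k := 1) hN
  have h_at_neg_one := spineProfile_neg_natCast (p := p) (k := 1) hN
  rw [Nat.cast_zero] at h_at_zero
  rw [Nat.cast_one] at h_at_one h_at_neg_one
  rw [secondDiff, zero_add, zero_sub, h_at_zero, h_at_one, h_at_neg_one,
    spineCoeff_min_succ N p 0, Nat.zero_min]
  push_cast
  rcases p.eq_zero_or_pos with rfl | h
  · rw [if_neg (lt_irrefl 0), if_pos rfl, spineCoeff]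
    field_simp
    ring
  · have h_right : (N : ℝ) - 1 ≠ 0 := by
      have : (1 : ℝ) < N := mod_cast (by omega : 1 < N)
      linarith
    rw [if_pos h, if_neg h.ne', spineCoeff]
    simp only [sub_zero, zero_add]
    field_simp
    ring

lemma secondDiff_spineProfile (hp : p < N) {x : ℤ} (hx : |(x : ℝ)| < N) :
    secondDiff (spineProfile N p) x = 6 * spineProfile N p x / ((N : ℝ) - |(x : ℝ)|) ^ 2 -
      if x = p then 1 / ((N : ℝ) - p) ^ 3 else 0 := by
  have h_width : (N : ℝ) - |(x : ℝ)| ≠ 0 := (sub_pos.2 hx).ne'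
  have h_main : 6 * spineProfile N p x / ((N : ℝ) - |(x : ℝ)|) ^ 2 =
      6 * ((N : ℝ) - |(x : ℝ)|) * spineCoeff N (min x.toNat p) := by
    rw [spineProfile, max_eq_right (sub_pos.2 hx).le]
    field_simp
  rw [h_main]
  obtain rfl | ⟨k, rfl⟩ | ⟨k, rfl⟩ :
      x = 0 ∨ (∃ k : ℕ, x = (k + 1 : ℕ)) ∨ ∃ k : ℕ, x = -(k + 1 : ℕ) := by
    rcases lt_trichotomy x 0 with h | h | h
    · exact .inr (.inr ⟨x.natAbs - 1, by omega⟩)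
    · exact .inl h
    · exact .inr (.inl ⟨x.natAbs - 1, by omega⟩)
  · rw [secondDiff_spineProfile_zero hp]
    rcases eq_or_ne p 0 with rfl | h
    · simp
    · simp [h, (Nat.cast_ne_zero (R := ℤ).2 h).symm]
  · rw [Int.cast_natCast, Nat.abs_cast, Nat.cast_lt] at hx
    rw [secondDiff_spineProfile_natCast_succ hp hx, Int.toNat_natCast, Int.cast_natCast,
      Nat.abs_cast, Nat.cast_succ]
    simp only [Nat.cast_inj]
    split_ifs with h
    · rw [← h, Nat.cast_succ]
    · rfl
  · rw [Int.cast_neg, abs_neg, Int.cast_natCast, Nat.abs_cast, Nat.cast_lt] at hx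
    rw [secondDiff_spineProfile_neg_natCast_succ hx, if_neg (by omega), Int.toNat_neg_natCast,
      Nat.zero_min, Int.cast_neg, abs_neg, Int.cast_natCast, Nat.abs_cast, Nat.cast_succ, sub_zero]

end SpineProfile

section ToothProfiles

/-- The ramp of slope one starting at `c`, the basic piecewise linear function on `ℤ`. -/
noncomputable def ramp (c : ℝ) (y : ℤ) : ℝ := max 0 ((y : ℝ) - c)

/-- The hat function, supported on `(-1, 1)`; `secondDiff_ramp` shows that `hat (y - c)` is the
mass which a unit kink at the real point `c` puts on the integer `y`. -/
noncomputable def hat (t : ℝ) : ℝ := max 0 (1 - |t|)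

/-- The symmetric piecewise linear bump of height one which vanishes outside `(-L, L)`. -/
noncomputable def tent (L : ℝ) (y : ℤ) : ℝ := max 0 (1 - |(y : ℝ)| / L)

/-- A multiple of the Green function with pole `q` of the interval `(0, L)`, extended by zero. -/
noncomputable def toothGreen (L q : ℝ) (y : ℤ) : ℝ :=
  ramp 0 y - L / (L - q) * ramp q y + q / (L - q) * ramp L y

variable {L q : ℝ}

lemma hat_nonneg (t : ℝ) : 0 ≤ hat t := le_max_left _ _

lemma hat_eq_zero {t : ℝ} (ht : 1 ≤ |t|) : hat t = 0 := max_eq_left (by linarith)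

lemma hat_intCast (n : ℤ) : hat n = if n = 0 then 1 else 0 := by
  split_ifs with hn
  · simp [hat, hn]
  · exact hat_eq_zero (mod_cast Int.one_le_abs hn)

lemma secondDiff_ramp (c : ℝ) (y : ℤ) : secondDiff (ramp c) y = hat (y - c) := by
  simp only [secondDiff, ramp, hat, Int.cast_add, Int.cast_sub, Int.cast_one]
  grind

lemma tent_eq_ramp (hL : 0 < L) (y : ℤ) :
    tent L y = 1 / L * (ramp (-L) y - 2 * ramp 0 y + ramp L y) := by
  rw [← mul_right_inj' hL.ne', tent, mul_max_of_nonneg _ _ hL.le]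
  simp only [ramp]
  field_simp
  grind

lemma secondDiff_tent (hL : 0 < L) (y : ℤ) : secondDiff (tent L) y =
    1 / L * (hat (y + L) + hat (y - L)) - if y = 0 then 2 / L else 0 := by
  have h_tent : secondDiff (tent L) y = 1 / L * (secondDiff (ramp (-L)) y -
      2 * secondDiff (ramp 0) y + secondDiff (ramp L) y) := by
    simp only [secondDiff, tent_eq_ramp hL]
    ring
  rw [h_tent, secondDiff_ramp, secondDiff_ramp, secondDiff_ramp, sub_neg_eq_add, sub_zero,
    hat_intCast]
  split_ifs <;> ring

lemma tent_nonneg (L : ℝ) (y : ℤ) : 0 ≤ tent L y := le_max_left _ _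

lemma tent_le_one (hL : 0 ≤ L) (y : ℤ) : tent L y ≤ 1 :=
  max_le zero_le_one (sub_le_self _ (by positivity))

lemma tent_zero (L : ℝ) : tent L 0 = 1 := by simp [tent]

lemma tent_eq_zero (hL : 0 < L) {y : ℤ} (hy : L ≤ |(y : ℝ)|) : tent L y = 0 :=
  max_eq_left (sub_nonpos.2 ((one_le_div hL).2 hy))

lemma secondDiff_toothGreen (L : ℝ) (q : ℕ) (y : ℤ) : secondDiff (toothGreen L q) y =
    (if y = 0 then 1 else 0) - L / (L - q) * (if y = q then 1 else 0) +
      q / (L - q) * hat (y - L) := by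
  have h_green : secondDiff (toothGreen L q) y = secondDiff (ramp 0) y -
      L / (L - q) * secondDiff (ramp q) y + q / (L - q) * secondDiff (ramp L) y := by
    simp only [secondDiff, toothGreen]
    ring
  have h_pole := hat_intCast (y - q)
  rw [Int.cast_sub, Int.cast_natCast] at h_pole
  rw [h_green, secondDiff_ramp, secondDiff_ramp, secondDiff_ramp, sub_zero, hat_intCast, h_pole]
  simp only [sub_eq_zero]

lemma toothGreen_of_nonpos (hq : 0 ≤ q) (hqL : q < L) {y : ℤ} (hy : y ≤ 0) :
    toothGreen L q y = 0 := by
  have : (y : ℝ) ≤ 0 := mod_cast hy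
  rw [toothGreen, ramp, ramp, ramp, max_eq_left (by linarith), max_eq_left (by linarith),
    max_eq_left (by linarith)]
  ring

lemma toothGreen_of_ge (hq : 0 ≤ q) (hqL : q < L) {y : ℤ} (hy : L ≤ y) :
    toothGreen L q y = 0 := by
  have : L - q ≠ 0 := (sub_pos.2 hqL).ne'
  rw [toothGreen, ramp, ramp, ramp, max_eq_right (by linarith), max_eq_right (by linarith),
    max_eq_right (by linarith)]
  field_simp
  ring

lemma toothGreen_mem_Icc (hq : 0 ≤ q) (hqL : q < L) (y : ℤ) : toothGreen L q y ∈ Set.Icc 0 q := by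
  have h_gap : 0 < L - q := sub_pos.2 hqL
  rcases le_or_gt y 0 with hy | hy
  · rw [toothGreen_of_nonpos hq hqL hy]
    exact ⟨le_rfl, hq⟩
  rcases le_or_gt L y with hyL | hyL
  · rw [toothGreen_of_ge hq hqL hyL]
    exact ⟨le_rfl, hq⟩
  have hy : (0 : ℝ) < y := mod_cast hy
  rw [toothGreen, ramp, ramp, ramp, max_eq_right (by linarith), max_eq_left (a := 0) (b := y - L)
    (by linarith), sub_zero, mul_zero, add_zero]
  rcases le_total (y : ℝ) q with hyq | hyq
  · rw [max_eq_left (sub_nonpos.2 hyq), mul_zero, sub_zero]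
    exact ⟨hy.le, hyq⟩
  · have h_affine : (y : ℝ) - L / (L - q) * (y - q) = q * ((L - y) / (L - q)) := by
      field_simp
      ring
    rw [max_eq_right (sub_nonneg.2 hyq), h_affine]
    exact ⟨mul_nonneg hq (div_nonneg (sub_nonneg.2 hyL.le) h_gap.le),
      mul_le_of_le_one_right hq ((div_le_one h_gap).2 (by linarith))⟩

end ToothProfiles

section CombGreen

/-- Half the length of the tooth of `x` in the domain `combD N`. -/
noncomputable def toothLength (N : ℕ) (x : ℤ) : ℝ := ((N : ℝ) - |(x : ℝ)|) ^ 2 / 3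

/-- A Green-type function of `combD N` with pole `(p, q)`. Since the teeth of `combD N` have
non-integer half-lengths, its Laplacian also charges the sites at distance less than one from the
tips of the teeth. -/
noncomputable def combGreen (N p q : ℕ) (w : ℤ × ℤ) : ℝ :=
  spineProfile N p w.1 * tent (toothLength N w.1) w.2 +
    if w.1 = p then toothGreen (toothLength N p) q w.2 / ((N : ℝ) - p) ^ 3 else 0

/-- Models the odometer of the divisible sandpile which fills `combD N`: its Laplacian is at least
one away from the origin, and it is negative at distance less than one from the tips of the
teeth. -/
noncomputable def approxOdometer (N : ℕ) (w : ℤ × ℤ) : ℝ :=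
  ((toothLength N w.1 - |(w.2 : ℝ)|) ^ 2 - 1) / 2

variable {N p q : ℕ} {x y : ℤ}

lemma toothLength_natCast (N p : ℕ) : toothLength N p = ((N : ℝ) - p) ^ 2 / 3 := by
  rw [toothLength, Int.cast_natCast, Nat.abs_cast]

lemma toothLength_nonneg (N : ℕ) (x : ℤ) : 0 ≤ toothLength N x := by
  rw [toothLength]
  positivity

lemma toothLength_pos (hx : |(x : ℝ)| < N) : 0 < toothLength N x := by
  rw [toothLength]
  have := sub_pos.2 hx
  positivity

lemma combGreen_axis (hq : q < toothLength N p) (x : ℤ) :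
    combGreen N p q (x, 0) = spineProfile N p x := by
  simp [combGreen, tent_zero, toothGreen_of_nonpos q.cast_nonneg hq le_rfl]

lemma combGreen_of_le_abs_fst (hp : p < N) (hx : (N : ℝ) ≤ |(x : ℝ)|) (y : ℤ) :
    combGreen N p q (x, y) = 0 := by
  have h_ne : x ≠ p := by
    rintro rfl
    rw [Int.cast_natCast, Nat.abs_cast] at hx
    exact hx.not_gt (mod_cast hp)
  simp only [combGreen, spineProfile_eq_zero hx, zero_mul, if_neg h_ne, add_zero]

lemma secondDiff_combGreen_tooth (x y : ℤ) :
    secondDiff (fun y => combGreen N p q (x, y)) y =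
      spineProfile N p x * secondDiff (tent (toothLength N x)) y +
        if x = p then secondDiff (toothGreen (toothLength N p) q) y / ((N : ℝ) - p) ^ 3 else 0 := by
  simp only [secondDiff, combGreen]
  split_ifs <;> ring

/-- The kinks of the tooth profiles at the axis cancel against the second difference along the
spine, which leaves the pole and the tips of the teeth. -/
lemma combLaplacian_combGreen (hp : p < N) (hq : q < toothLength N p) (hx : |(x : ℝ)| < N) (y : ℤ) :
    combLaplacian (combGreen N p q) (x, y) =
      spineProfile N p x / toothLength N x *
        (hat (y + toothLength N x) + hat (y - toothLength N x)) +
      if x = p then (q * hat (y - toothLength N p) - if y = q then toothLength N p else 0) /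
        ((toothLength N p - q) * ((N : ℝ) - p) ^ 3) else 0 := by
  have h_width : (0 : ℝ) < N - |(x : ℝ)| := sub_pos.2 hx
  have h_pole : (0 : ℝ) < N - p := sub_pos.2 (mod_cast hp)
  have h_gap : 0 < toothLength N p - q := sub_pos.2 hq
  have h_two_div : 6 / ((N : ℝ) - |(x : ℝ)|) ^ 2 = 2 / toothLength N x := by
    rw [toothLength]
    field_simp
    norm_num
  rw [combLaplacian, secondDiff_combGreen_tooth, funext (combGreen_axis hq),
    secondDiff_spineProfile hp hx, mul_div_right_comm, h_two_div,
    secondDiff_tent (toothLength_pos hx), secondDiff_toothGreen]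
  have := toothLength_pos hx
  split_ifs <;> field_simp <;> ring

lemma combLaplacian_combGreen_of_le_abs_fst (hp : p < N) (hq : q < toothLength N p)
    (hx : (N : ℝ) ≤ |(x : ℝ)|) (y : ℤ) : combLaplacian (combGreen N p q) (x, y) =
      if y = 0 then spineProfile N p (x + 1) + spineProfile N p (x - 1) else 0 := by
  rw [combLaplacian, funext (combGreen_of_le_abs_fst hp hx), funext (combGreen_axis hq),
    secondDiff, secondDiff, spineProfile_eq_zero hx]
  simp

lemma combLaplacian_combGreen_nonneg (hp : p < N) (hq : q < toothLength N p) {w : ℤ × ℤ}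
    (hw : w ≠ (↑p, ↑q)) : 0 ≤ combLaplacian (combGreen N p q) w := by
  obtain ⟨x, y⟩ := w
  rcases le_or_gt (N : ℝ) |(x : ℝ)| with hx | hx
  · rw [combLaplacian_combGreen_of_le_abs_fst hp hq hx]
    split_ifs
    exacts [add_nonneg (spineProfile_nonneg hp _) (spineProfile_nonneg hp _), le_rfl]
  · have h_pole : (0 : ℝ) ≤ N - p := sub_nonneg.2 (mod_cast hp.le)
    have : 0 ≤ toothLength N p - q := sub_nonneg.2 hq.le
    rw [combLaplacian_combGreen hp hq hx]
    refine add_nonneg (mul_nonneg (div_nonneg (spineProfile_nonneg hp x) (toothLength_nonneg N x))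
      (add_nonneg (hat_nonneg _) (hat_nonneg _))) ?_
    split_ifs with hxp hyq
    · exact absurd (Prod.ext hxp hyq) hw
    · rw [sub_zero]
      have := hat_nonneg (y - toothLength N p)
      positivity
    · rfl

lemma combLaplacian_combGreen_eq_zero (hp : p < N) (hq : q < toothLength N p) {w : ℤ × ℤ}
    (hw : w ≠ (↑p, ↑q)) (h_tip : 1 ≤ abs (toothLength N w.1 - |(w.2 : ℝ)|)) :
    combLaplacian (combGreen N p q) w = 0 := by
  obtain ⟨x, y⟩ := w
  rcases le_or_gt (N : ℝ) |(x : ℝ)| with hx | hx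
  · rw [combLaplacian_combGreen_of_le_abs_fst hp hq hx, ite_eq_right_iff]
    rintro rfl
    have h_ne : (N : ℤ) ≠ |x| := fun h => by
      have h_cast : (N : ℝ) = |(x : ℝ)| := mod_cast h
      norm_num [toothLength, h_cast] at h_tip
    have h_lt : (N : ℤ) < |x| := lt_of_le_of_ne (mod_cast hx) h_ne
    rw [spineProfile_eq_zero (mod_cast (by grind : (N : ℤ) ≤ |x + 1|)),
      spineProfile_eq_zero (mod_cast (by grind : (N : ℤ) ≤ |x - 1|)), add_zero]
  · have h_length : |toothLength N x| = toothLength N x := abs_of_nonneg (toothLength_nonneg N x)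
    have h_lower : hat (y + toothLength N x) = 0 := hat_eq_zero <| h_tip.trans <| by
      simpa only [h_length, abs_neg, sub_neg_eq_add, add_comm] using
        abs_abs_sub_abs_le (toothLength N x) (-y)
    have h_upper : hat (y - toothLength N x) = 0 := hat_eq_zero <| h_tip.trans <| by
      simpa only [h_length, abs_sub_comm] using abs_abs_sub_abs_le (toothLength N x) y
    rw [combLaplacian_combGreen hp hq hx, h_lower, h_upper]
    split_ifs with hxp hyq
    · exact absurd (Prod.ext hxp hyq) hw
    · rw [← hxp, h_upper]
      ring
    · ring

lemma approxOdometer_mul_combLaplacian_combGreen_nonpos (hp : p < N) (hq : q < toothLength N p)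
    {w : ℤ × ℤ} (hw : w ≠ (↑p, ↑q)) :
    approxOdometer N w * combLaplacian (combGreen N p q) w ≤ 0 := by
  rcases le_or_gt 1 (abs (toothLength N w.1 - |(w.2 : ℝ)|)) with h_tip | h_tip
  · rw [combLaplacian_combGreen_eq_zero hp hq hw h_tip, mul_zero]
  · refine mul_nonpos_of_nonpos_of_nonneg ?_ (combLaplacian_combGreen_nonneg hp hq hw)
    rw [approxOdometer]
    linarith [(sq_lt_one_iff_abs_lt_one _).2 h_tip]

lemma combLaplacian_combGreen_pole (hp : p < N) (hq : q + 1 ≤ toothLength N p) :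
    combLaplacian (combGreen N p q) (p, q) =
      -(1 / (3 * (toothLength N p - q) * ((N : ℝ) - p))) := by
  have h_pole : (0 : ℝ) < N - p := sub_pos.2 (mod_cast hp)
  have h_gap : 0 < toothLength N p - q := by linarith
  have h_mem : |((p : ℤ) : ℝ)| < N := by rwa [Int.cast_natCast, Nat.abs_cast, Nat.cast_lt]
  have h_lower : hat (q + toothLength N p) = 0 :=
    hat_eq_zero ((by linarith [q.cast_nonneg (α := ℝ)] : 1 ≤ (q : ℝ) + _).trans (le_abs_self _))
  have h_upper : hat (q - toothLength N p) = 0 :=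
    hat_eq_zero ((by linarith : 1 ≤ -((q : ℝ) - _)).trans (neg_le_abs _))
  rw [combLaplacian_combGreen hp (by linarith) h_mem, Int.cast_natCast, h_lower, h_upper,
    if_pos rfl, if_pos rfl]
  have h_cancel : toothLength N p / ((N : ℝ) - p) ^ 3 = 1 / (3 * (N - p)) := by
    rw [toothLength_natCast]
    field_simp
  calc spineProfile N p p / toothLength N p * (0 + 0) +
        (q * 0 - toothLength N p) / ((toothLength N p - q) * ((N : ℝ) - p) ^ 3)
      = -(toothLength N p / ((N : ℝ) - p) ^ 3 / (toothLength N p - q)) := by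
        field_simp
        ring
    _ = -(1 / (3 * (toothLength N p - q) * ((N : ℝ) - p))) := by
        rw [h_cancel]
        field_simp

end CombGreen

/-! ### The approximate odometer -/

section Odometer

lemma secondDiff_comp_abs (f : ℝ → ℝ) {x : ℤ} (hx : x ≠ 0) :
    secondDiff (fun t => f |(t : ℝ)|) x =
      f (|(x : ℝ)| + 1) + f (|(x : ℝ)| - 1) - 2 * f |(x : ℝ)| := by
  simp only [secondDiff, Int.cast_add, Int.cast_sub, Int.cast_one]
  rcases hx.lt_or_gt with h | h
  · have : (x : ℝ) ≤ -1 := mod_cast Int.le_sub_one_of_lt h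
    rw [abs_of_nonpos (by linarith), abs_of_nonpos (by linarith), abs_of_nonpos (by linarith),
      neg_add, neg_sub', sub_neg_eq_add, ← sub_eq_add_neg]
    ring
  · have : (1 : ℝ) ≤ x := mod_cast h
    rw [abs_of_nonneg (by linarith), abs_of_nonneg (by linarith), abs_of_nonneg (by linarith)]

lemma secondDiff_comp_abs_zero (f : ℝ → ℝ) :
    secondDiff (fun t : ℤ => f |(t : ℝ)|) 0 = 2 * (f 1 - f 0) := by
  simp only [secondDiff, zero_add, zero_sub, Int.cast_one, Int.cast_neg, Int.cast_zero, abs_neg,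
    abs_one, abs_zero]
  ring

lemma approxOdometer_axis (N : ℕ) (x : ℤ) :
    approxOdometer N (x, 0) = (((N : ℝ) - |(x : ℝ)|) ^ 4 / 9 - 1) / 2 := by
  simp only [approxOdometer, toothLength, Int.cast_zero, abs_zero]
  ring

lemma secondDiff_approxOdometer_tooth_zero (N : ℕ) (x : ℤ) :
    secondDiff (fun y => approxOdometer N (x, y)) 0 = 1 - 2 * toothLength N x := by
  refine (secondDiff_comp_abs_zero fun t => ((toothLength N x - t) ^ 2 - 1) / 2).trans ?_
  ring

lemma one_le_combLaplacian_approxOdometer (N : ℕ) {w : ℤ × ℤ} (hw : w ≠ (0, 0)) :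
    1 ≤ combLaplacian (approxOdometer N) w := by
  obtain ⟨x, y⟩ := w
  rcases eq_or_ne y 0 with rfl | hy
  · have hx : x ≠ 0 := fun h => hw (by rw [h])
    rw [combLaplacian_spine, secondDiff_approxOdometer_tooth_zero,
      funext (approxOdometer_axis N),
      secondDiff_comp_abs (fun t => (((N : ℝ) - t) ^ 4 / 9 - 1) / 2) hx, toothLength]
    ring_nf
    norm_num
  · rw [combLaplacian_tooth _ _ hy]
    refine ((secondDiff_comp_abs (fun t => ((toothLength N x - t) ^ 2 - 1) / 2) hy).trans ?_).ge
    ring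

lemma combLaplacian_approxOdometer_zero (N : ℕ) :
    combLaplacian (approxOdometer N) (0, 0) = 1 - (4 * (N : ℝ) ^ 3 + 4 * N - 1) / 9 := by
  rw [combLaplacian_spine, secondDiff_approxOdometer_tooth_zero, funext (approxOdometer_axis N),
    secondDiff_comp_abs_zero fun t => (((N : ℝ) - t) ^ 4 / 9 - 1) / 2, toothLength, Int.cast_zero,
    abs_zero]
  ring

end Odometer

section Counting

lemma combD_mono {ρ σ : ℝ} (h : ρ ≤ σ) : combD ρ ⊆ combD σ := by
  rintro ⟨x, y⟩ ⟨hx, hy⟩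
  refine ⟨hx.trans_le h, hy.trans_le ?_⟩
  have : 0 ≤ ρ - |(x : ℝ)| := sub_nonneg.2 hx.le
  gcongr

lemma combD_finite (ρ : ℝ) : (combD ρ).Finite := by
  refine (Set.finite_Icc (-⌈ρ⌉, -⌈ρ ^ 2⌉) (⌈ρ⌉, ⌈ρ ^ 2⌉)).subset ?_
  rintro ⟨x, y⟩ ⟨hx, hy⟩
  have h_fst : |x| ≤ ⌈ρ⌉ := by exact_mod_cast hx.le.trans (Int.le_ceil ρ)
  have h_sq : (ρ - |(x : ℝ)|) ^ 2 / 3 ≤ ρ ^ 2 := by nlinarith [abs_nonneg (x : ℝ)]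
  have h_snd : |y| ≤ ⌈ρ ^ 2⌉ := by exact_mod_cast (hy.le.trans h_sq).trans (Int.le_ceil _)
  exact ⟨⟨(abs_le.1 h_fst).1, (abs_le.1 h_snd).1⟩, ⟨(abs_le.1 h_fst).2, (abs_le.1 h_snd).2⟩⟩

lemma sum_two_mul_sq_div_three_sub_one (r : ℝ) (K : ℕ) :
    ∑ x ∈ Finset.Icc (-K : ℤ) K, (2 * ((r - |(x : ℝ)|) ^ 2 / 3) - 1) =
      2 / 3 * ((2 * K + 1) * r ^ 2 - 2 * r * (K * (K + 1)) + K * (K + 1) * (2 * K + 1) / 3) -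
        (2 * K + 1) := by
  rw [Finset.sum_Icc_of_even_eq_range fun x => by simp]
  simp only [Int.cast_natCast, Nat.abs_cast, nsmul_eq_mul, Nat.cast_ofNat, Int.cast_zero, abs_zero]
  rw [sub_eq_iff_eq_add, ← eq_inv_mul_iff_mul_eq₀ two_ne_zero]
  induction K with
  | zero => simp; ring
  | succ K ih =>
    rw [Finset.sum_range_succ, ih]
    push_cast
    ring

lemma two_mul_sub_one_le_card_Icc_ceil (L : ℝ) :
    2 * L - 1 ≤ ((Finset.Icc (-(⌈L⌉ - 1)) (⌈L⌉ - 1)).card : ℝ) := by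
  have h_card : 2 * ⌈L⌉ - 1 ≤ ((Finset.Icc (-(⌈L⌉ - 1)) (⌈L⌉ - 1)).card : ℤ) := by
    rw [Int.card_Icc]
    omega
  have h_cast : 2 * (⌈L⌉ : ℝ) - 1 ≤ ((Finset.Icc (-(⌈L⌉ - 1)) (⌈L⌉ - 1)).card : ℝ) :=
    mod_cast h_card
  linarith [Int.le_ceil L]

lemma sum_le_ncard_combD {ρ : ℝ} {K : ℕ} (hK : K < ρ) :
    ∑ x ∈ Finset.Icc (-K : ℤ) K, (2 * ((ρ - |(x : ℝ)|) ^ 2 / 3) - 1) ≤ ((combD ρ).ncard : ℝ) := by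
  let tip (x : ℤ) : ℤ := ⌈(ρ - |(x : ℝ)|) ^ 2 / 3⌉ - 1
  let box := (Finset.Icc (-K : ℤ) K).sigma fun x => Finset.Icc (-tip x) (tip x)
  have h_box : (box.map (Equiv.sigmaEquivProd ℤ ℤ).toEmbedding : Set (ℤ × ℤ)) ⊆ combD ρ := by
    simp only [Set.subset_def, Finset.mem_coe, Finset.mem_map, box, Finset.mem_sigma,
      Finset.mem_Icc, ← abs_le]
    rintro - ⟨⟨x, y⟩, ⟨hx, hy⟩, rfl⟩
    exact ⟨lt_of_le_of_lt (mod_cast hx) hK, by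
      simpa using Int.lt_ceil.1 (Int.lt_of_le_sub_one hy)⟩
  have h_card := Set.ncard_le_ncard h_box (combD_finite ρ)
  rw [Set.ncard_coe_finset, Finset.card_map, Finset.card_sigma] at h_card
  refine le_trans ?_ (Nat.cast_le.2 h_card)
  rw [Nat.cast_sum]
  exact Finset.sum_le_sum fun x _ => two_mul_sub_one_le_card_Icc_ceil _

lemma four_mul_cube_le_ncard_combD {N : ℕ} (hN : 1 ≤ N) :
    (4 * (N : ℝ) ^ 3 + 4 * N - 1) / 9 ≤ (combD (N + 1 : ℕ)).ncard := by
  have h_one : (1 : ℝ) ≤ N := mod_cast hN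
  refine le_trans ?_ (sum_le_ncard_combD (Nat.cast_lt.2 N.lt_succ_self))
  rw [sum_two_mul_sq_div_three_sub_one]
  push_cast
  nlinarith

end Counting

/-! ### Size and energy of the Green-type function -/

section Series

lemma tsum_int_le_of_eq_zero_of_le_abs {f : ℤ → ℝ} {C L : ℝ} (hL : 0 ≤ L) (hC : 0 ≤ C)
    (hf : ∀ y, f y ≤ C) (hf_zero : ∀ y : ℤ, L ≤ |(y : ℝ)| → f y = 0) :
    ∑' y, f y ≤ (2 * L + 1) * C := by
  have h_floor : 0 ≤ ⌊L⌋ := Int.floor_nonneg.2 hL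
  have h_card : ((Finset.Icc (-⌊L⌋) ⌊L⌋).card : ℝ) = 2 * ⌊L⌋ + 1 := by
    have : ((Finset.Icc (-⌊L⌋) ⌊L⌋).card : ℤ) = 2 * ⌊L⌋ + 1 := by
      rw [Int.card_Icc]
      omega
    exact_mod_cast this
  rw [tsum_eq_sum (s := Finset.Icc (-⌊L⌋) ⌊L⌋) fun y hy => hf_zero y ?_]
  · calc ∑ y ∈ Finset.Icc (-⌊L⌋) ⌊L⌋, f y
        ≤ (Finset.Icc (-⌊L⌋) ⌊L⌋).card • C := Finset.sum_le_card_nsmul _ _ _ fun y _ => hf y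
      _ ≤ (2 * L + 1) * C := by
          rw [nsmul_eq_mul, h_card]
          gcongr
          exact Int.floor_le L
  · rw [Finset.mem_Icc, ← abs_le, Int.le_floor, not_le] at hy
    exact_mod_cast hy.le

lemma one_div_add_one_sq_le {u : ℝ} (hu : 0 < u) : 1 / (u + 1) ^ 2 ≤ 1 / u - 1 / (u + 1) := by
  rw [div_sub_div _ _ (by positivity) (by positivity),
    div_le_div_iff₀ (by positivity) (by positivity)]
  nlinarith

variable {m : ℝ}

lemma sum_range_one_div_sq_le (hm : 0 < m) (K : ℕ) :
    ∑ k ∈ Finset.range K, 1 / (m + k + 1) ^ 2 ≤ 1 / m := by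
  calc ∑ k ∈ Finset.range K, 1 / (m + k + 1) ^ 2
      ≤ ∑ k ∈ Finset.range K, (1 / (m + k) - 1 / (m + (k + 1 : ℕ))) :=
        Finset.sum_le_sum fun k _ => by
          have := one_div_add_one_sq_le (u := m + k) (by positivity)
          push_cast
          rwa [← add_assoc]
    _ = 1 / (m + (0 : ℕ)) - 1 / (m + K) := Finset.sum_range_sub' (fun k : ℕ => 1 / (m + k)) K
    _ ≤ 1 / m := by
        rw [Nat.cast_zero, add_zero]
        exact sub_le_self _ (by positivity)

lemma hasSum_int_one_div_add_abs_sq (hm : 0 < m) :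
    HasSum (fun x : ℤ => 1 / (m + |(x : ℝ)|) ^ 2)
      (1 / m ^ 2 + 2 * ∑' k : ℕ, 1 / (m + k + 1) ^ 2) := by
  have h_half : HasSum (fun k : ℕ => 1 / (m + k + 1) ^ 2) (∑' k : ℕ, 1 / (m + k + 1) ^ 2) :=
    (summable_of_sum_range_le (fun _ => by positivity) (sum_range_one_div_sq_le hm)).hasSum
  have h_abs (k : ℕ) : |(k : ℝ) + 1| = k + 1 := abs_of_nonneg (by positivity)
  convert HasSum.of_add_one_of_neg_add_one (f := fun x : ℤ => 1 / (m + |(x : ℝ)|) ^ 2)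
    (m := ∑' k : ℕ, 1 / (m + k + 1) ^ 2) (m' := ∑' k : ℕ, 1 / (m + k + 1) ^ 2) ?_ ?_ using 1
  · rw [Int.cast_zero, abs_zero, add_zero]
    ring
  · convert h_half using 4 with k
    push_cast
    rw [h_abs, add_assoc]
  · convert h_half using 4 with k
    push_cast
    rw [abs_neg, h_abs, add_assoc]

lemma summable_int_one_div_add_abs_sub_sq (hm : 0 < m) (p : ℤ) :
    Summable fun x : ℤ => 1 / (m + |(x : ℝ) - p|) ^ 2 := by
  simpa only [Function.comp_def, Equiv.subRight_apply, Int.cast_sub] using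
    (Equiv.subRight p).summable_iff.2 (hasSum_int_one_div_add_abs_sq hm).summable

lemma tsum_int_one_div_add_abs_sub_sq_le (hm : 1 ≤ m) (p : ℤ) :
    ∑' x : ℤ, 1 / (m + |(x : ℝ) - p|) ^ 2 ≤ 3 / m := by
  have h_pos : 0 < m := zero_lt_one.trans_le hm
  have h_half : ∑' k : ℕ, 1 / (m + k + 1) ^ 2 ≤ 1 / m :=
    Real.tsum_le_of_sum_range_le (fun _ => by positivity) (sum_range_one_div_sq_le h_pos)
  have h_shift := (Equiv.subRight p).tsum_eq fun x : ℤ => 1 / (m + |(x : ℝ)|) ^ 2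
  simp only [Equiv.subRight_apply, Int.cast_sub] at h_shift
  rw [h_shift, (hasSum_int_one_div_add_abs_sq h_pos).tsum_eq]
  have h_sq : 1 / m ^ 2 ≤ 1 / m := one_div_le_one_div_of_le h_pos (le_self_pow₀ hm two_ne_zero)
  linarith [div_eq_mul_one_div 3 m]

end Series

section GreenBounds

variable {N p q : ℕ}

lemma combGreen_nonneg (hp : p < N) (hq : q < toothLength N p) (w : ℤ × ℤ) :
    0 ≤ combGreen N p q w := by
  have h_pole : (0 : ℝ) ≤ N - p := sub_nonneg.2 (mod_cast hp.le)
  refine add_nonneg (mul_nonneg (spineProfile_nonneg hp _) (tent_nonneg _ _)) ?_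
  split_ifs
  exacts [div_nonneg (toothGreen_mem_Icc q.cast_nonneg hq _).1 (pow_nonneg h_pole 3), le_rfl]

lemma combGreen_eq_zero (hp : p < N) (hq : q < toothLength N p) {w : ℤ × ℤ} (hw : w ∉ combD N) :
    combGreen N p q w = 0 := by
  obtain ⟨x, y⟩ := w
  rcases le_or_gt (N : ℝ) |(x : ℝ)| with hx | hx
  · exact combGreen_of_le_abs_fst hp hx y
  have hy : toothLength N x ≤ |(y : ℝ)| := not_lt.1 fun hy => hw ⟨hx, hy⟩
  rw [combGreen, tent_eq_zero (toothLength_pos hx) hy, mul_zero, zero_add, ite_eq_right_iff]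
  rintro rfl
  rcases le_abs.1 hy with hy | hy
  · rw [toothGreen_of_ge q.cast_nonneg hq hy, zero_div]
  · have h_neg : (y : ℝ) ≤ 0 := by linarith [toothLength_nonneg N p]
    rw [toothGreen_of_nonpos q.cast_nonneg hq (mod_cast h_neg), zero_div]

lemma hasFiniteSupport_combGreen (hp : p < N) (hq : q < toothLength N p) :
    (combGreen N p q).HasFiniteSupport :=
  (combD_finite N).subset fun _ => not_imp_comm.1 (combGreen_eq_zero hp hq)

lemma combGreen_le_column (hp : p < N) (hq : q < toothLength N p) (x y : ℤ) :
    combGreen N p q (x, y) ≤ 1 / ((N : ℝ) - p + |(x : ℝ) - p|) ^ 2 +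
      if x = p then 1 / (3 * ((N : ℝ) - p)) else 0 := by
  have h_pole : (0 : ℝ) < N - p := sub_pos.2 (mod_cast hp)
  refine add_le_add ((mul_le_of_le_one_right (spineProfile_nonneg hp x)
    (tent_le_one (toothLength_nonneg N x) y)).trans (spineProfile_le hp x)) ?_
  split_ifs
  · calc toothGreen (toothLength N p) q y / ((N : ℝ) - p) ^ 3
        ≤ toothLength N p / ((N : ℝ) - p) ^ 3 := by
          gcongr
          exact (toothGreen_mem_Icc q.cast_nonneg hq y).2.trans hq.le
      _ = 1 / (3 * ((N : ℝ) - p)) := by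
          rw [toothLength_natCast]
          field_simp
  · rfl

lemma combGreen_le (hp : p < N) (hq : q < toothLength N p) (w : ℤ × ℤ) :
    combGreen N p q w ≤ 2 / ((N : ℝ) - p) := by
  have h_one : (1 : ℝ) ≤ N - p := le_sub_iff_add_le'.2 (mod_cast hp)
  have h_pos : (0 : ℝ) < N - p := zero_lt_one.trans_le h_one
  have h_spine : 1 / ((N : ℝ) - p + |(w.1 : ℝ) - p|) ^ 2 ≤ 1 / (N - p) :=
    one_div_le_one_div_of_le h_pos <|
      (le_self_pow₀ h_one two_ne_zero).trans <| pow_le_pow_left₀ h_pos.le (by simp) 2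
  have h_tooth : (if w.1 = p then 1 / (3 * ((N : ℝ) - p)) else 0) ≤ 1 / (N - p) := by
    split_ifs
    exacts [one_div_le_one_div_of_le h_pos (by linarith), by positivity]
  linarith [combGreen_le_column hp hq w.1 w.2, div_eq_mul_one_div 2 ((N : ℝ) - p)]

lemma two_mul_toothLength_add_one_le (hp : p < N) {x : ℤ} (hx : |(x : ℝ)| < N) :
    2 * toothLength N x + 1 ≤ 5 / 3 * ((N : ℝ) - p + |(x : ℝ) - p|) ^ 2 := by
  have h_one : (1 : ℝ) ≤ N - p := le_sub_iff_add_le'.2 (mod_cast hp)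
  have h_radius : 1 ≤ ((N : ℝ) - p + |(x : ℝ) - p|) ^ 2 :=
    one_le_pow₀ (by linarith [abs_nonneg ((x : ℝ) - p)])
  have h_width : ((N : ℝ) - |(x : ℝ)|) ^ 2 ≤ (N - p + |(x : ℝ) - p|) ^ 2 :=
    pow_le_pow_left₀ (sub_nonneg.2 hx.le)
      (by linarith [le_abs_self (x : ℝ), neg_abs_le ((x : ℝ) - p)]) 2
  rw [toothLength]
  linarith

lemma five_thirds_mul_sq_mul_column_bound_sq_le (hp : p < N) (x : ℤ) :
    5 / 3 * ((N : ℝ) - p + |(x : ℝ) - p|) ^ 2 *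
        (1 / ((N : ℝ) - p + |(x : ℝ) - p|) ^ 2 + if x = p then 1 / (3 * ((N : ℝ) - p)) else 0) ^ 2 ≤
      10 / 3 * (1 / ((N : ℝ) - p + |(x : ℝ) - p|) ^ 2) + if x = p then 1 else 0 := by
  have h_pos : (0 : ℝ) < N - p := sub_pos.2 (mod_cast hp)
  have h_radius : 0 < (N : ℝ) - p + |(x : ℝ) - p| := by positivity
  split_ifs with hx
  · rw [hx, Int.cast_natCast, sub_self, abs_zero, add_zero]
    refine (mul_le_mul_of_nonneg_left add_sq_le (by positivity)).trans ?_
    field_simp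
    nlinarith [sq_pos_of_pos h_pos]
  · rw [add_zero, add_zero]
    field_simp
    norm_num

lemma tsum_combGreen_column_sq_le (hp : p < N) (hq : q < toothLength N p) (x : ℤ) :
    ∑' y, combGreen N p q (x, y) ^ 2 ≤
      10 / 3 * (1 / ((N : ℝ) - p + |(x : ℝ) - p|) ^ 2) + if x = p then 1 else 0 := by
  rcases le_or_gt (N : ℝ) |(x : ℝ)| with hx | hx
  · simp only [combGreen_of_le_abs_fst hp hx, zero_pow two_ne_zero, tsum_zero]
    positivity
  have h_zero (y : ℤ) (hy : toothLength N x ≤ |(y : ℝ)|) : combGreen N p q (x, y) ^ 2 = 0 := by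
    have h_out : (x, y) ∉ combD N := fun h => hy.not_gt h.2
    rw [combGreen_eq_zero hp hq h_out, zero_pow two_ne_zero]
  have h_le (y : ℤ) := pow_le_pow_left₀ (combGreen_nonneg hp hq _) (combGreen_le_column hp hq x y) 2
  exact (tsum_int_le_of_eq_zero_of_le_abs (toothLength_nonneg N x) (sq_nonneg _) h_le h_zero).trans
    ((mul_le_mul_of_nonneg_right (two_mul_toothLength_add_one_le hp hx) (sq_nonneg _)).trans
      (five_thirds_mul_sq_mul_column_bound_sq_le hp x))

lemma tsum_combGreen_sq_le (hp : p < N) (hq : q < toothLength N p) :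
    ∑' w, combGreen N p q w ^ 2 ≤ 12 := by
  have h_one : (1 : ℝ) ≤ N - p := le_sub_iff_add_le'.2 (mod_cast hp)
  have h_summable : Summable fun w => combGreen N p q w ^ 2 :=
    summable_of_hasFiniteSupport <| (hasFiniteSupport_combGreen hp hq).subset fun _ => by simp
  have h_series := (summable_int_one_div_add_abs_sub_sq (zero_lt_one.trans_le h_one) p).mul_left
    (10 / 3)
  rw [Int.cast_natCast] at h_series
  have h_pole := hasSum_ite_eq (p : ℤ) (1 : ℝ)
  calc ∑' w, combGreen N p q w ^ 2 = ∑' x, ∑' y, combGreen N p q (x, y) ^ 2 := h_summable.tsum_prod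
    _ ≤ ∑' x : ℤ, (10 / 3 * (1 / ((N : ℝ) - p + |(x : ℝ) - p|) ^ 2) + if x = p then 1 else 0) :=
        h_summable.prod.tsum_le_tsum (tsum_combGreen_column_sq_le hp hq)
          (h_series.add h_pole.summable)
    _ = 10 / 3 * ∑' x : ℤ, 1 / ((N : ℝ) - p + |(x : ℝ) - p|) ^ 2 + 1 := by
        rw [h_series.tsum_add h_pole.summable, h_pole.tsum_eq, tsum_mul_left]
    _ ≤ 10 / 3 * (3 / 1) + 1 := by
        gcongr
        exact (tsum_int_one_div_add_abs_sub_sq_le h_one p).trans (by gcongr)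
    _ ≤ 12 := by norm_num

end GreenBounds

/-! ### Inner fluctuations -/

section InnerEstimate

lemma isBarrier_combGreen {N p q : ℕ} (hp : p < N) (hq : q + 1 ≤ toothLength N p) :
    IsBarrier (p, q) (combD (N + 1 : ℕ)).ncard
      (((toothLength N p - q) ^ 2 - 1) / (6 * (toothLength N p - q) * ((N : ℝ) - p)))
      (2 / ((N : ℝ) - p)) 12 (combGreen N p q) := by
  have hq' : q < toothLength N p := by linarith
  have h_origin : 1 - ((combD (N + 1 : ℕ)).ncard : ℝ) ≤
      combLaplacian (approxOdometer N) (0, 0) := by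
    rw [combLaplacian_approxOdometer_zero]
    have := four_mul_cube_le_ncard_combD (Nat.one_le_of_lt hp)
    linarith
  refine
    { nonneg := combGreen_nonneg hp hq'
      le := combGreen_le hp hq'
      hasFiniteSupport := hasFiniteSupport_combGreen hp hq'
      subharmonic := fun _ => combLaplacian_combGreen_nonneg hp hq'
      energy := tsum_combGreen_sq_le hp hq'
      gap := le_trans (le_of_eq ?_) (neg_mul_combLaplacian_le_discrepancy (z := (p, q))
        (combGreen_nonneg hp hq') (hasFiniteSupport_combGreen hp hq')
        (fun _ => one_le_combLaplacian_approxOdometer N) h_origin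
        fun _ => approxOdometer_mul_combLaplacian_combGreen_nonpos hp hq') }
  rw [combLaplacian_combGreen_pole hp hq]
  have hm : (0 : ℝ) < N - p := sub_pos.2 (by exact_mod_cast hp)
  have hδ : 0 < toothLength N p - q := sub_pos.2 hq'
  simp only [approxOdometer, Int.cast_natCast, Nat.abs_cast]
  field_simp
  ring

section Depth

variable {N p q : ℕ} {T : ℝ}

lemma sub_lt_of_mem_combD (hz : ((p, q) : ℤ × ℤ) ∈ combD ((N + 1 : ℕ) - T)) :
    T - 1 < (N : ℝ) - p := by
  have := hz.1
  push_cast [Nat.abs_cast] at this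
  linarith

lemma mul_le_toothLength_sub_of_mem_combD (hT : 1 ≤ T)
    (hz : ((p, q) : ℤ × ℤ) ∈ combD ((N + 1 : ℕ) - T)) :
    (T - 1) * ((N : ℝ) - p) / 3 ≤ toothLength N p - q := by
  have hm := sub_lt_of_mem_combD hz
  have hq := hz.2
  push_cast [Nat.abs_cast] at hq
  rw [toothLength_natCast]
  nlinarith

lemma div_le_sq_sub_one_div {m δ : ℝ} (hT : 10 ≤ T) (hm : T - 1 < m)
    (hδ : (T - 1) * m / 3 ≤ δ) : T / 72 ≤ (δ ^ 2 - 1) / (6 * δ * m) := by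
  have hδ_ge : 27 ≤ δ := by nlinarith
  have hm_pos : 0 < m := by linarith
  calc T / 72 ≤ (T - 1) * m / 3 / (12 * m) := by
        rw [div_le_div_iff₀ (by norm_num) (by positivity)]
        nlinarith
    _ ≤ δ / (12 * m) := by gcongr
    _ = δ ^ 2 / 2 / (6 * δ * m) := by
        field_simp
        norm_num
    _ ≤ (δ ^ 2 - 1) / (6 * δ * m) := by
        gcongr
        nlinarith

lemma exists_isBarrier_natCast (hT : 10 ≤ T)
    (hz : ((p, q) : ℤ × ℤ) ∈ combD ((N + 1 : ℕ) - T)) :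
    ∃ M H, T / 72 * M ≤ 12 ∧ IsBarrier (p, q) (combD (N + 1 : ℕ)).ncard (T / 72) M 12 H := by
  have hm := sub_lt_of_mem_combD hz
  have hδ := mul_le_toothLength_sub_of_mem_combD (by linarith) hz
  have hp : p < N := by
    have : (p : ℝ) < N := by linarith
    exact_mod_cast this
  have hq : q + 1 ≤ toothLength N p := by nlinarith
  refine ⟨_, _, ?_, (isBarrier_combGreen hp hq).mono_gap (div_le_sq_sub_one_div hT hm hδ)⟩
  rw [← mul_div_assoc, div_le_iff₀ (by linarith)]
  linarith

end Depth

lemma natAbs_mem_combD_iff {z : ℤ × ℤ} {ρ : ℝ} :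
    ((z.1.natAbs, z.2.natAbs) : ℤ × ℤ) ∈ combD ρ ↔ z ∈ combD ρ := by
  simp [combD]

lemma exists_isBarrier {n : ℕ} {T : ℝ} (hT : 10 ≤ T) {z : ℤ × ℤ} (hz : z ∈ combD (n - T)) :
    ∃ M H, T / 72 * M ≤ 12 ∧ IsBarrier z (combD n).ncard (T / 72) M 12 H := by
  have hn : n ≠ 0 := by
    rintro rfl
    have := (abs_nonneg (z.1 : ℝ)).trans_lt hz.1
    rw [Nat.cast_zero] at this
    linarith
  obtain ⟨N, rfl⟩ := Nat.exists_eq_succ_of_ne_zero hn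
  obtain ⟨M, H, hM, hH⟩ := exists_isBarrier_natCast hT (natAbs_mem_combD_iff.2 hz)
  obtain ⟨ε, δ, h_reflect⟩ := exists_reflect_natAbs z
  rw [← h_reflect] at hH
  exact ⟨M, _, hM, hH.comp_reflect⟩

variable {Ω : Type*} [MeasurableSpace Ω] {P : Measure Ω} {W : ℕ → ℕ → Ω → ℤ × ℤ}

theorem IsIIDCombWalks.measure_notMem_dlaCluster_le_of_mem_combD (hW : IsIIDCombWalks P W) {n : ℕ}
    {T : ℝ} (hT : 10 ≤ T) {z : ℤ × ℤ} (hz : z ∈ combD (n - T)) :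
    P {ω | z ∉ dlaCluster (fun i t => W i t ω) (combD n).ncard} ≤
      ENNReal.ofReal (Real.exp (-(T ^ 2 / 12 ^ 5))) := by
  obtain ⟨M, H, hM, hH⟩ := exists_isBarrier hT hz
  convert hH.measure_notMem_dlaCluster_le (by positivity) (by norm_num) hM hW using 4
  ring

theorem IsIIDCombWalks.measure_not_combD_subset_dlaCluster_le (hW : IsIIDCombWalks P W) (n : ℕ)
    {T : ℝ} (hT : 10 ≤ T) :
    P {ω | ¬ combD (n - T) ⊆ dlaCluster (fun i t => W i t ω) (combD n).ncard} ≤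
      ENNReal.ofReal ((combD n).ncard * Real.exp (-(T ^ 2 / 12 ^ 5))) := by
  have h_fin : (combD (n - T)).Finite := combD_finite _
  have h_card : h_fin.toFinset.card ≤ (combD n).ncard := by
    rw [← Set.ncard_eq_toFinset_card _ h_fin]
    exact Set.ncard_le_ncard (combD_mono (by linarith)) (combD_finite _)
  calc P {ω | ¬ combD (n - T) ⊆ dlaCluster (fun i t => W i t ω) (combD n).ncard}
      ≤ P (⋃ z ∈ h_fin.toFinset, {ω | z ∉ dlaCluster (fun i t => W i t ω) (combD n).ncard}) :=
        measure_mono fun ω hω => by simpa [Set.not_subset] using hω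
    _ ≤ h_fin.toFinset.card • ENNReal.ofReal (Real.exp (-(T ^ 2 / 12 ^ 5))) :=
        (measure_biUnion_finset_le _ _).trans <| Finset.sum_le_card_nsmul _ _ _ fun z hz =>
          hW.measure_notMem_dlaCluster_le_of_mem_combD hT (h_fin.mem_toFinset.1 hz)
    _ ≤ ENNReal.ofReal ((combD n).ncard * Real.exp (-(T ^ 2 / 12 ^ 5))) := by
        rw [nsmul_eq_mul, ENNReal.ofReal_mul (by positivity), ENNReal.ofReal_natCast]
        gcongr

end InnerEstimate

/-- **Proposition (inner fluctuations).** There is `κ_in > 0`, independent of `n`,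
such that for any `a > 0` and `n` large enough,
`P(𝒟(n − a√(log n)) ⊄ A(n)) ≤ d(n) exp(−κ_in a² log n)`. -/
theorem comb_idla_inner_estimate :
    ∃ κ : ℝ, 0 < κ ∧
      ∀ a : ℝ, 0 < a → ∃ N : ℕ, ∀ n : ℕ, N ≤ n →
        ∀ (Ω : Type*) [MeasurableSpace Ω] (P : Measure Ω) (W : ℕ → ℕ → Ω → ℤ × ℤ),
          IsIIDCombWalks P W →
          P {ω | ¬ combD ((n : ℝ) - a * Real.sqrt (Real.log n)) ⊆
              dlaCluster (fun i t => W i t ω) ((combD n).ncard)} ≤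
            ENNReal.ofReal (((combD n).ncard : ℝ) * Real.exp (-κ * a ^ 2 * Real.log n)) := by
  refine ⟨1 / 12 ^ 5, by norm_num, fun a ha => ⟨⌈Real.exp ((10 / a) ^ 2)⌉₊, ?_⟩⟩
  intro n hn Ω _ P W hW
  have h_log : (10 / a) ^ 2 ≤ Real.log n :=
    (Real.le_log_iff_exp_le ((Real.exp_pos _).trans_le (Nat.ceil_le.1 hn))).2 (Nat.ceil_le.1 hn)
  have h_depth : 10 ≤ a * Real.sqrt (Real.log n) :=
    (div_le_iff₀' ha).1 (Real.le_sqrt_of_sq_le h_log)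
  convert hW.measure_not_combD_subset_dlaCluster_le n h_depth using 4
  rw [mul_pow, Real.sq_sqrt ((sq_nonneg _).trans h_log)]
  ring
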